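/- arXiv:1606.05443 — 9 statements merged into one kernel-verified Lean document; each statement's English description precedes it below -/
import Mathlib

section
/- Let I ⊆ ℝ be an interval and let γ : I → ℂ be a continuous and locally injective curve which is analytic at a point t0 ∈ I. Then a function f : γ(I) → ℂ is real analytic at (t0, γ(t0)) if and only if f is holomorphically extendable at (t0, γ(t0)). -/
open Set Metric Filter

/-- `γ` is locally injective on `I`: every point of `I` has a relative neighborhood
in `I` on which `γ` is injective. -/
def LocallyInjOn (γ : ℝ → ℂ) (I : Set ℝ) : Prop :=
  ∀ t ∈ I, ∃ ε > 0, Set.InjOn γ (I ∩ Ioo (t - ε) (t + ε))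

/-- The curve `γ : I → ℂ` is analytic at `t0 ∈ I`: there exist an open set `V ⊆ ℂ`
containing `t0`, a `δ > 0` with `(t0−δ, t0+δ) ∩ I ⊆ V`, and an injective holomorphic
function `F : V → ℂ` agreeing with `γ` on `(t0−δ, t0+δ) ∩ I`. -/
def AnalyticCurveAt (γ : ℝ → ℂ) (I : Set ℝ) (t0 : ℝ) : Prop :=
  ∃ (V : Set ℂ) (δ : ℝ) (F : ℂ → ℂ), IsOpen V ∧ (t0 : ℂ) ∈ V ∧ 0 < δ ∧
    (∀ t ∈ Ioo (t0 - δ) (t0 + δ) ∩ I, (t : ℂ) ∈ V) ∧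
    DifferentiableOn ℂ F V ∧ Set.InjOn F V ∧
    ∀ t ∈ Ioo (t0 - δ) (t0 + δ) ∩ I, F (t : ℂ) = γ t

/-- `f : γ(I) → ℂ` is real analytic at `(t0, γ(t0))`: there are `δ > 0` and a power
series `Σ aₙ (t − t0)ⁿ` with radius of convergence `> δ` (witnessed by `ρ > δ` with
`Σ ‖aₙ‖ ρⁿ < ∞`) representing `f ∘ γ` on `(t0−δ, t0+δ) ∩ I`. -/
def RealAnalyticAtCurve (γ : ℝ → ℂ) (I : Set ℝ) (f : ℂ → ℂ) (t0 : ℝ) : Prop :=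
  ∃ (a : ℕ → ℂ) (δ ρ : ℝ), 0 < δ ∧ δ < ρ ∧
    Summable (fun n => ‖a n‖ * ρ ^ n) ∧
    ∀ t ∈ Ioo (t0 - δ) (t0 + δ) ∩ I,
      HasSum (fun n => a n * ((t : ℂ) - (t0 : ℂ)) ^ n) (f (γ t))

/-- `f : γ(I) → ℂ` is holomorphically extendable at `(t0, γ(t0))`: there exist `r > 0`,
`η > 0` and a holomorphic `F` on `D(γ(t0), r)` with `γ((t0−η, t0+η) ∩ I) ⊆ D(γ(t0), r)`
and `F(γ(t)) = f(γ(t))` for `t ∈ (t0−η, t0+η) ∩ I`. -/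
def HolExtAtCurve (γ : ℝ → ℂ) (I : Set ℝ) (f : ℂ → ℂ) (t0 : ℝ) : Prop :=
  ∃ (r η : ℝ) (F : ℂ → ℂ), 0 < r ∧ 0 < η ∧
    DifferentiableOn ℂ F (ball (γ t0) r) ∧
    γ '' (Ioo (t0 - η) (t0 + η) ∩ I) ⊆ ball (γ t0) r ∧
    ∀ t ∈ Ioo (t0 - η) (t0 + η) ∩ I, F (γ t) = f (γ t)

open Topology in
/-- The inverse of an injective holomorphic function is analytic. -/
lemma inj_hol_inverse {V : Set ℂ} {F : ℂ → ℂ} {z0 : ℂ} (hV : IsOpen V) (hz0 : z0 ∈ V)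
    (hF : DifferentiableOn ℂ F V) (hinj : Set.InjOn F V) :
    ∃ G : ℂ → ℂ, AnalyticAt ℂ G (F z0) ∧ ∀ z ∈ V, G (F z) = z := by
  have hG : ∀ z ∈ V, Function.invFunOn F V (F z) = z := fun z hz => hinj.leftInvOn_invFunOn hz
  set G := Function.invFunOn F V with hGdef
  refine ⟨G, ?_, hG⟩
  have hFa : ∀ z ∈ V, AnalyticAt ℂ F z := fun z hz => hF.analyticAt (hV.mem_nhds hz)
  have hnc : ∀ z ∈ V, ¬ ∀ᶠ w in 𝓝 z, F w = F z := by
    intro z hz h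
    have h2 : ∀ᶠ w in 𝓝 z, w = z := by
      filter_upwards [h, hV.mem_nhds hz] with w hw hwV using hinj hwV hz hw
    have h3 : ∀ᶠ w in 𝓝[≠] z, w = z := h2.filter_mono nhdsWithin_le_nhds
    obtain ⟨w, hw, hw'⟩ := (h3.and self_mem_nhdsWithin).exists
    exact hw' hw
  have hopen : ∀ z ∈ V, 𝓝 (F z) ≤ map F (𝓝 z) := fun z hz =>
    ((hFa z hz).eventually_constant_or_nhds_le_map_nhds).resolve_left (hnc z hz)
  have him : ∀ z ∈ V, ∀ᶠ w in 𝓝 (F z), w ∈ F '' V := fun z hz =>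
    hopen z hz (image_mem_map (hV.mem_nhds hz))
  have hcont : ∀ z ∈ V, Tendsto G (𝓝 (F z)) (𝓝 z) := by
    intro z hz s hs
    have hm : F '' (s ∩ V) ∈ 𝓝 (F z) :=
      hopen z hz (image_mem_map (inter_mem hs (hV.mem_nhds hz)))
    rw [mem_map]
    refine mem_of_superset hm ?_
    rintro _ ⟨x, ⟨hxs, hxV⟩, rfl⟩
    simpa [hG x hxV] using hxs
  have hd : ∀ᶠ z in 𝓝[≠] z0, deriv F z ≠ 0 := by
    refine (hFa z0 hz0).deriv.eventually_eq_zero_or_eventually_ne_zero.resolve_left ?_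
    intro h
    apply hnc z0 hz0
    obtain ⟨r, hr, hb⟩ := Metric.eventually_nhds_iff_ball.1 (h.and (hV.mem_nhds hz0))
    filter_upwards [ball_mem_nhds z0 hr] with w hw
    exact isOpen_ball.is_const_of_deriv_eq_zero (convex_ball z0 r).isPreconnected
      (hF.mono fun x hx => (hb x hx).2) (fun x hx => (hb x hx).1) hw (mem_ball_self hr)
  rw [eventually_nhdsWithin_iff] at hd
  refine Complex.analyticAt_of_differentiable_on_punctured_nhds_of_continuousAt ?_ ?_
  · rw [eventually_nhdsWithin_iff]
    filter_upwards [(hcont z0 hz0).eventually hd, him z0 hz0] with w hw hwV hne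
    obtain ⟨z, hz, rfl⟩ := hwV
    rw [hG z hz] at hw
    have hzne : z ≠ z0 := fun h => hne (by simp [h])
    have hca : ContinuousAt G (F z) := by
      rw [ContinuousAt, hG z hz]; exact hcont z hz
    refine (HasDerivAt.of_local_left_inverse (f := F) (f' := deriv F z) hca ?_ (hw hzne)
      ?_).differentiableAt
    · rw [hG z hz]; exact (hFa z hz).differentiableAt.hasDerivAt
    · filter_upwards [him z hz] with w hw
      obtain ⟨x, hx, rfl⟩ := hw
      rw [hG x hx]
  · rw [ContinuousAt, hG z0 hz0]; exact hcont z0 hz0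

open Topology in
lemma eventually_curve {I : Set ℝ} {t0 : ℝ} {P : ℝ → Prop} (h : ∀ᶠ t in 𝓝[I] t0, P t) :
    ∃ η > 0, ∀ t ∈ Ioo (t0 - η) (t0 + η) ∩ I, P t := by
  obtain ⟨η, hη, h⟩ := Metric.mem_nhdsWithin_iff.1 h
  refine ⟨η, hη, fun t ht => h ?_⟩
  rwa [Real.ball_eq_Ioo]

open Topology in
lemma analyticAt_tsum_pow (a : ℕ → ℂ) (z0 : ℂ) (ρ : ℝ) (hρ : 0 < ρ)
    (ha : Summable (fun n => ‖a n‖ * ρ ^ n)) :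
    AnalyticAt ℂ (fun z => ∑' n, a n * (z - z0) ^ n) z0 := by
  refine ⟨FormalMultilinearSeries.ofScalars ℂ a, hasFPowerSeriesAt_iff'.2 ?_⟩
  filter_upwards [ball_mem_nhds z0 hρ] with z hz
  have : Summable (fun n => a n * (z - z0) ^ n) := by
    refine Summable.of_norm_bounded ha fun n => ?_
    rw [norm_mul, norm_pow]
    rw [mem_ball, dist_eq_norm] at hz
    gcongr
  simpa [FormalMultilinearSeries.coeff_ofScalars, mul_comm] using this.hasSum

/-- If `γ : I → ℂ` is a continuous, locally injective curve on an interval `I ⊆ ℝ`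
which is analytic at `t0 ∈ I`, then `f : γ(I) → ℂ` is real analytic at `(t0, γ(t0))`
iff it is holomorphically extendable at `(t0, γ(t0))`. -/
theorem realAnalyticAt_iff_holExtAt
    (I : Set ℝ) (hI : I.OrdConnected) (γ : ℝ → ℂ)
    (hcont : ContinuousOn γ I) (hinj : LocallyInjOn γ I)
    (t0 : ℝ) (ht0 : t0 ∈ I) (han : AnalyticCurveAt γ I t0)
    (f : ℂ → ℂ) :
    RealAnalyticAtCurve γ I f t0 ↔ HolExtAtCurve γ I f t0 := by
  obtain ⟨V, δ, F, hV, htV, hδ, hsub, hF, hFinj, hFγ⟩ := han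
  have hF0 : F t0 = γ t0 := hFγ t0 ⟨by constructor <;> linarith, ht0⟩
  have hnear : ∀ᶠ t : ℝ in nhdsWithin t0 I, (t : ℂ) ∈ V ∧ F t = γ t := by
    filter_upwards [self_mem_nhdsWithin, mem_nhdsWithin_of_mem_nhds
      (Ioo_mem_nhds (show t0 - δ < t0 by linarith) (show t0 < t0 + δ by linarith))] with t h1 h2
    exact ⟨hsub t ⟨h2, h1⟩, hFγ t ⟨h2, h1⟩⟩
  constructor
  · rintro ⟨a, d, ρ, hd, hdρ, hs, hf⟩
    obtain ⟨G, hG, hGF⟩ := inj_hol_inverse hV htV hF hFinj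
    have hg := analyticAt_tsum_pow a t0 ρ (hd.trans hdρ) hs
    set g : ℂ → ℂ := fun z => ∑' n, a n * (z - t0) ^ n with hgdef
    have hH : AnalyticAt ℂ (g ∘ G) (F t0) := by
      apply AnalyticAt.comp _ hG
      rwa [hGF _ htV]
    rw [hF0] at hH
    obtain ⟨r, hr, hball⟩ := Metric.eventually_nhds_iff_ball.1 hH.eventually_analyticAt
    have hev : ∀ᶠ t : ℝ in nhdsWithin t0 I, γ t ∈ ball (γ t0) r ∧ (g ∘ G) (γ t) = f (γ t) := by
      filter_upwards [hnear, (hcont t0 ht0).eventually (ball_mem_nhds _ hr), self_mem_nhdsWithin,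
        mem_nhdsWithin_of_mem_nhds
        (Ioo_mem_nhds (show t0 - d < t0 by linarith) (show t0 < t0 + d by linarith))]
        with t h1 h2 h3 h4
      refine ⟨h2, ?_⟩
      rw [Function.comp_apply, ← h1.2, hGF _ h1.1, h1.2]
      exact (hf t ⟨h4, h3⟩).tsum_eq
    obtain ⟨η, hη, h⟩ := eventually_curve hev
    refine ⟨r, η, g ∘ G, hr, hη,
      fun z hz => (hball z hz).differentiableAt.differentiableWithinAt, ?_, fun t ht => (h t ht).2⟩
    rintro _ ⟨t, ht, rfl⟩
    exact (h t ht).1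
  · rintro ⟨r, η, Φ, hr, hη, hΦ, -, hΦf⟩
    have hA : AnalyticAt ℂ (Φ ∘ F) t0 := by
      refine AnalyticAt.comp ?_ (hF.analyticAt (hV.mem_nhds htV))
      rw [hF0]
      exact hΦ.analyticAt (ball_mem_nhds _ hr)
    obtain ⟨p, hp⟩ := hA
    obtain ⟨R, hR, hsum⟩ := Metric.eventually_nhds_iff_ball.1 (hasFPowerSeriesAt_iff'.1 hp)
    have hev : ∀ᶠ t : ℝ in nhdsWithin t0 I,
        HasSum (fun n => p.coeff n * ((t : ℂ) - (t0 : ℂ)) ^ n) (f (γ t)) := by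
      filter_upwards [hnear, self_mem_nhdsWithin,
        mem_nhdsWithin_of_mem_nhds
        (Ioo_mem_nhds (show t0 - η < t0 by linarith) (show t0 < t0 + η by linarith)),
        mem_nhdsWithin_of_mem_nhds (ball_mem_nhds t0 hR)]
        with t h1 h2 h3 h4
      have h5 := hsum t (by simpa [dist_eq_norm, ← Complex.ofReal_sub] using h4)
      rw [Function.comp_apply, h1.2, hΦf t ⟨h3, h2⟩] at h5
      simpa [mul_comm] using h5
    obtain ⟨e, he, h⟩ := eventually_curve hev
    refine ⟨p.coeff, min e (R / 4), R / 2, lt_min he (by linarith),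
      (min_le_right _ _).trans_lt (by linarith), ?_, ?_⟩
    · have h5 := (hsum ((t0 : ℂ) + ((R / 2 : ℝ) : ℂ)) (by
        rw [mem_ball, dist_eq_norm, add_sub_cancel_left, Complex.norm_real, Real.norm_eq_abs,
          abs_of_pos (by linarith)]
        linarith)).summable.norm
      refine h5.congr fun n => ?_
      rw [add_sub_cancel_left, norm_smul, norm_pow, Complex.norm_real, Real.norm_eq_abs,
          abs_of_pos (by linarith), mul_comm]
    · intro t ht
      have := min_le_left e (R / 4)
      exact h t ⟨⟨by linarith [ht.1.1], by linarith [ht.1.2]⟩, ht.2⟩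
end

section
/- Let I ⊆ ℝ be an interval, let γ : I → ℂ be a continuous and locally injective curve, and let t0 ∈ I. Then γ is analytic at t0 if and only if for every function f : γ(I) → ℂ the following two conditions are equivalent: (1) f is real analytic at (t0, γ(t0)); (2) f is holomorphically extendable at (t0, γ(t0)). -/
open Set Metric Filter

open Topology in
theorem ana_left_inverse {F : ℂ → ℂ} {z0 : ℂ} (hF : AnalyticAt ℂ F z0) {U : Set ℂ}
    (hU : U ∈ 𝓝 z0) (hinj : InjOn F U) :
    ∃ G : ℂ → ℂ, AnalyticAt ℂ G (F z0) ∧ ∀ᶠ z in 𝓝 z0, G (F z) = z := by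
  have hnc : ¬ ∀ᶠ z in 𝓝 z0, F z = F z0 := by
    intro h
    have h1 : ∀ᶠ z in 𝓝[≠] z0, F z = F z0 ∧ z ∈ U :=
      (h.and hU).filter_mono nhdsWithin_le_nhds
    obtain ⟨z, ⟨hz1, hz2⟩, hz3⟩ := (h1.and self_mem_nhdsWithin).exists
    exact hz3 (hinj hz2 (mem_of_mem_nhds hU) hz1)
  have hle : 𝓝 (F z0) ≤ Filter.map F (𝓝 z0) :=
    hF.eventually_constant_or_nhds_le_map_nhds.resolve_left hnc
  have hleft : ∀ z ∈ U, Function.invFunOn F U (F z) = z := fun z hz =>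
    hinj.leftInvOn_invFunOn hz
  have hUe : ∀ᶠ z in 𝓝 z0, ∀ᶠ y in 𝓝 z, y ∈ U := eventually_eventually_nhds.2 hU
  refine ⟨Function.invFunOn F U, ?_, Filter.mem_of_superset hU hleft⟩
  have hcont : ContinuousAt (Function.invFunOn F U) (F z0) := by
    have : Tendsto (Function.invFunOn F U ∘ F) (𝓝 z0) (𝓝 z0) :=
      tendsto_id.congr' (Filter.mem_of_superset hU fun z hz => (hleft z hz).symm)
    unfold ContinuousAt
    rw [hleft z0 (mem_of_mem_nhds hU)]
    exact (tendsto_map'_iff.2 this).mono_left hle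
  have hd : ∀ᶠ z in 𝓝[≠] z0, deriv F z ≠ 0 := by
    refine hF.deriv.eventually_eq_zero_or_eventually_ne_zero.resolve_left fun h => hnc ?_
    obtain ⟨r, hr, hb⟩ := Metric.eventually_nhds_iff_ball.1 (h.and hF.eventually_analyticAt)
    refine Filter.mem_of_superset (ball_mem_nhds z0 hr) fun z hz => ?_
    exact isOpen_ball.is_const_of_deriv_eq_zero (convex_ball z0 r).isPreconnected
      (fun y hy => (hb y hy).2.differentiableAt.differentiableWithinAt)
      (fun y hy => (hb y hy).1) hz (mem_ball_self hr)
  apply Complex.analyticAt_of_differentiable_on_punctured_nhds_of_continuousAt _ hcont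
  rw [eventually_nhdsWithin_iff] at hd ⊢
  apply hle
  show ∀ᶠ z in 𝓝 z0, F z ∈ ({F z0}ᶜ : Set ℂ) → _
  filter_upwards [hd, hUe, hF.eventually_analyticAt] with z h1 h2 h3 h4
  have h5 : deriv F z ≠ 0 := h1 fun h => h4 (by rw [mem_singleton_iff.1 h]; rfl)
  exact (h3.hasStrictDerivAt.to_local_left_inverse h5
    (h2.mono hleft)).hasDerivAt.differentiableAt

open Topology in
theorem eventually_within_iff {I : Set ℝ} {t0 : ℝ} {p : ℝ → Prop} :
    (∀ᶠ t in 𝓝[I] t0, p t) ↔ ∃ δ > 0, ∀ t ∈ Ioo (t0 - δ) (t0 + δ) ∩ I, p t := by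
  rw [eventually_iff, Metric.mem_nhdsWithin_iff]
  simp only [Real.ball_eq_Ioo]
  rfl

open Topology in
theorem realAnalytic_iff {γ : ℝ → ℂ} {I : Set ℝ} {f : ℂ → ℂ} {t0 : ℝ} :
    RealAnalyticAtCurve γ I f t0 ↔
      ∃ g : ℂ → ℂ, AnalyticAt ℂ g t0 ∧ ∀ᶠ t : ℝ in 𝓝[I] t0, g (t : ℂ) = f (γ t) := by
  constructor
  · rintro ⟨a, δ, ρ, hδ, hρ, hs, h⟩
    have hρ0 : 0 < ρ := hδ.trans hρ
    let p := FormalMultilinearSeries.ofScalars ℂ a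
    have hr : ((NNReal.mk ρ hρ0.le : NNReal) : ENNReal) ≤ p.radius := by
      apply p.le_radius_of_summable
      refine hs.congr fun n => ?_
      simp [p, FormalMultilinearSeries.ofScalars, norm_smul]
    have hpos : 0 < p.radius := lt_of_lt_of_le (ENNReal.coe_pos.2 ((NNReal.coe_pos (r := NNReal.mk ρ hρ0.le)).1 hρ0)) hr
    have hp := p.hasFPowerSeriesOnBall hpos
    have h2 := hp.comp_sub (t0 : ℂ)
    rw [zero_add] at h2
    refine ⟨_, h2.analyticAt, eventually_within_iff.2 ⟨δ, hδ, fun t ht => ?_⟩⟩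
    refine HasSum.tsum_eq ?_
    have := h t ht
    have e : (fun n => p n fun _ => (t : ℂ) - t0) = fun n => a n * ((t : ℂ) - t0) ^ n := by
      funext n
      simp [p, FormalMultilinearSeries.ofScalars, List.prod_ofFn]
    rw [← e] at this
    exact this
  · rintro ⟨g, hg, he⟩
    obtain ⟨p, r, hp⟩ := hg
    obtain ⟨δ, hδ, he⟩ := eventually_within_iff.1 he
    obtain ⟨ρ, hρ, hρr⟩ := ENNReal.lt_iff_exists_nnreal_btwn.1 hp.r_pos
    have hρ0 : (0 : ℝ) < ρ := by simpa using hρ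
    refine ⟨p.coeff, min δ (ρ / 2), ρ, lt_min hδ (half_pos hρ0),
      (min_le_right _ _).trans_lt (half_lt_self hρ0), ?_, ?_⟩
    · refine (p.summable_norm_mul_pow (hρr.trans_le hp.r_le)).congr fun n => ?_
      simp
    · rintro t ⟨ht, htI⟩
      have h1 : |t - t0| < min δ (ρ / 2) := by
        rw [abs_lt]; constructor <;> linarith [ht.1, ht.2]
      have h2 : |t - t0| < δ := h1.trans_le (min_le_left _ _)
      have h3 : |t - t0| < ρ := by linarith [h1.trans_le (min_le_right _ _)]
      rw [abs_lt] at h2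
      rw [← he t ⟨⟨by linarith, by linarith⟩, htI⟩]
      have h4 : (t : ℂ) ∈ Metric.eball (t0 : ℂ) r := by
        refine Metric.eball_subset_eball hρr.le ?_
        rw [Metric.eball_coe, mem_ball, dist_eq_norm, ← Complex.ofReal_sub, Complex.norm_real]
        exact h3
      have := hp.hasSum_sub h4
      have e : (fun n => p n fun _ => (t : ℂ) - t0) =
          fun n => p.coeff n * ((t : ℂ) - t0) ^ n := by
        funext n
        simp [mul_comm]
      rw [e] at this
      exact this

open Topology in
theorem holExt_iff {γ : ℝ → ℂ} {I : Set ℝ} {f : ℂ → ℂ} {t0 : ℝ} (hc : ContinuousOn γ I)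
    (ht0 : t0 ∈ I) : HolExtAtCurve γ I f t0 ↔
      ∃ F : ℂ → ℂ, AnalyticAt ℂ F (γ t0) ∧ ∀ᶠ t in 𝓝[I] t0, F (γ t) = f (γ t) := by
  constructor
  · rintro ⟨r, η, F, hr, hη, hd, -, h⟩
    exact ⟨F, hd.analyticAt (ball_mem_nhds _ hr), eventually_within_iff.2 ⟨η, hη, h⟩⟩
  · rintro ⟨F, hF, h⟩
    obtain ⟨r, hr, hb⟩ := Metric.eventually_nhds_iff_ball.1 hF.eventually_analyticAt
    obtain ⟨η, hη, he⟩ := eventually_within_iff.1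
      (h.and ((hc t0 ht0).eventually (ball_mem_nhds _ hr)))
    refine ⟨r, η, F, hr, hη,
      fun y hy => (hb y hy).differentiableAt.differentiableWithinAt, ?_, fun t ht => (he t ht).1⟩
    rintro _ ⟨t, ht, rfl⟩
    exact (he t ht).2

open Topology in
theorem analyticCurve_iff {γ : ℝ → ℂ} {I : Set ℝ} {t0 : ℝ} : AnalyticCurveAt γ I t0 ↔
      ∃ F : ℂ → ℂ, AnalyticAt ℂ F t0 ∧ (∃ U ∈ 𝓝 (t0 : ℂ), InjOn F U) ∧
        ∀ᶠ t : ℝ in 𝓝[I] t0, F (t : ℂ) = γ t := by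
  constructor
  · rintro ⟨V, δ, F, hV, h0, hδ, -, hd, hi, h⟩
    exact ⟨F, hd.analyticAt (hV.mem_nhds h0), ⟨V, hV.mem_nhds h0, hi⟩,
      eventually_within_iff.2 ⟨δ, hδ, h⟩⟩
  · rintro ⟨F, hF, ⟨U, hU, hi⟩, h⟩
    obtain ⟨r, hr, hb⟩ := Metric.eventually_nhds_iff_ball.1 (hF.eventually_analyticAt.and hU)
    have hc : Tendsto (fun t : ℝ => (t : ℂ)) (𝓝[I] t0) (𝓝 (t0 : ℂ)) :=
      (Complex.continuous_ofReal.tendsto t0).mono_left nhdsWithin_le_nhds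
    obtain ⟨δ, hδ, he⟩ := eventually_within_iff.1
      (h.and (hc.eventually (ball_mem_nhds _ hr)))
    exact ⟨ball t0 r, δ, F, isOpen_ball, mem_ball_self hr, hδ, fun t ht => (he t ht).2,
      fun y hy => (hb y hy).1.differentiableAt.differentiableWithinAt,
      hi.mono fun y hy => (hb y hy).2, fun t ht => (he t ht).1⟩

/-- Let `γ : I → ℂ` be a continuous, locally injective curve on an interval `I ⊆ ℝ`
and `t0 ∈ I`. Then `γ` is analytic at `t0` iff for every function `f : γ(I) → ℂ`,
real analyticity of `f` at `(t0, γ(t0))` is equivalent to holomorphic extendability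
of `f` at `(t0, γ(t0))`. -/
theorem analyticCurveAt_iff_forall_realAnalytic_iff_holExt
    (I : Set ℝ) (hI : I.OrdConnected) (γ : ℝ → ℂ)
    (hcont : ContinuousOn γ I) (hinj : LocallyInjOn γ I)
    (t0 : ℝ) (ht0 : t0 ∈ I) :
    AnalyticCurveAt γ I t0 ↔
      ∀ f : ℂ → ℂ, (RealAnalyticAtCurve γ I f t0 ↔ HolExtAtCurve γ I f t0) := by
  have hc : Tendsto (fun t : ℝ => (t : ℂ)) (nhdsWithin t0 I) (nhds (t0 : ℂ)) :=
    (Complex.continuous_ofReal.tendsto t0).mono_left nhdsWithin_le_nhds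
  simp only [analyticCurve_iff, realAnalytic_iff, holExt_iff hcont ht0]
  constructor
  · rintro ⟨F, hF, ⟨U, hU, hi⟩, h⟩ f
    have hF0 : F t0 = γ t0 := h.self_of_nhdsWithin ht0
    constructor
    · rintro ⟨g, hg, hgf⟩
      obtain ⟨G, hG, hGF⟩ := ana_left_inverse hF hU hi
      have hG0 : G (F t0) = t0 := hGF.self_of_nhds
      refine ⟨g ∘ G, hF0 ▸ AnalyticAt.comp (by rwa [hG0]) hG, ?_⟩
      filter_upwards [h, hgf, hc.eventually hGF] with t h1 h2 h3
      rw [← h2, Function.comp, ← h1, h3]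
    · rintro ⟨H, hH, hHf⟩
      refine ⟨H ∘ F, AnalyticAt.comp (by rwa [hF0]) hF, ?_⟩
      filter_upwards [h, hHf] with t h1 h2
      rw [← h2, Function.comp, h1]
  · intro h
    by_cases hs : ∃ s ∈ I, s ≠ t0
    · obtain ⟨ε, hε, hi⟩ := hinj t0 ht0
      obtain ⟨g, hg, hgγ⟩ := (h id).2 ⟨id, analyticAt_id, Eventually.of_forall fun _ => rfl⟩
      obtain ⟨H, hH, hHf⟩ := (h fun z => ((Function.invFunOn γ (I ∩ Ioo (t0 - ε) (t0 + ε)) z : ℝ) : ℂ)).1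
        ⟨id, analyticAt_id, eventually_within_iff.2 ⟨ε, hε, fun t ht => by
          rw [hi.leftInvOn_invFunOn ⟨ht.2, ht.1⟩]; rfl⟩⟩
      have hg0 : g t0 = γ t0 := hgγ.self_of_nhdsWithin ht0
      have hHγ : ∀ᶠ t : ℝ in nhdsWithin t0 I, H (g t) = t := by
        filter_upwards [hHf, hgγ, eventually_within_iff.2 ⟨ε, hε, fun t ht => ht⟩] with t h1 h2 h3
        rw [h2, id, h1, hi.leftInvOn_invFunOn ⟨h3.2, h3.1⟩]
      have hcomp : AnalyticAt ℂ (H ∘ g) t0 := AnalyticAt.comp (by rwa [hg0]) hg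
      have hfreq : ∃ᶠ z in nhdsWithin (t0 : ℂ) {(t0 : ℂ)}ᶜ, (H ∘ g) z = id z := by
        have hacc : (nhdsWithin t0 (I \ {t0})).NeBot := by
          obtain ⟨s, hsI, hst⟩ := hs
          have hpre : I.Nontrivial := ⟨s, hsI, t0, ht0, hst⟩
          exact accPt_principal_iff_nhdsWithin.1
            ((isPreconnected_iff_ordConnected.2 hI).preperfect_of_nontrivial hpre t0 ht0)
        have ht : Tendsto (fun t : ℝ => (t : ℂ)) (nhdsWithin t0 (I \ {t0}))
            (nhdsWithin (t0 : ℂ) {(t0 : ℂ)}ᶜ) := by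
          refine tendsto_nhdsWithin_iff.2 ⟨hc.mono_left (nhdsWithin_mono _ sdiff_subset), ?_⟩
          filter_upwards [self_mem_nhdsWithin] with t ht hh
          exact ht.2 (Complex.ofReal_injective hh)
        refine ht.frequently (Eventually.frequently ?_)
        exact hHγ.filter_mono (nhdsWithin_mono _ sdiff_subset)
      have hev := (hcomp.frequently_eq_iff_eventually_eq analyticAt_id).1 hfreq
      refine ⟨g, hg, ⟨_, hev, fun x hx y hy hxy => ?_⟩, hgγ⟩
      have hx' : H (g x) = x := hx
      have hy' : H (g y) = y := hy
      rw [← hx', ← hy', hxy]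
    · push Not at hs
      refine ⟨fun z => z + (γ t0 - t0), by fun_prop, ⟨univ, univ_mem, fun x _ y _ hxy => by simpa using hxy⟩, ?_⟩
      filter_upwards [self_mem_nhdsWithin] with t ht
      rw [hs t ht]; ring
end

section
/- Let L be a compact subset of ℂ and let U ⊆ ℂ be open with L ⊆ U. Then the following are equivalent: (i) every function f : ℂ → ℂ which is continuous on ℂ, holomorphic on ℂ∖L, and has a finite limit at infinity, is constant (i.e. the continuous analytic capacity a(L) is zero); (ii) every function f which is continuous on U and holomorphic on U∖L is holomorphic on U. -/
open Filter

section Helpers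

open MeasureTheory Complex

lemma polar_aux (ψ : ℂ → ℂ) (hψ : ContDiff ℝ 1 ψ) (hc : HasCompactSupport ψ) :
    ∫ w : ℂ, w⁻¹ * (fderiv ℝ ψ w 1 + I * fderiv ℝ ψ w I) = -(2 * Real.pi) * ψ 0 := by
  have hd : Continuous (fderiv ℝ ψ) := hψ.continuous_fderiv one_ne_zero
  have hdiff : Differentiable ℝ ψ := hψ.differentiable one_ne_zero
  have hdc : HasCompactSupport (fderiv ℝ ψ) := hc.fderiv ℝ
  obtain ⟨R, hR⟩ := hdc.isCompact.isBounded.subset_closedBall 0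
  set e : ℝ → ℂ := fun θ => (Real.cos θ : ℂ) + Real.sin θ * I with he
  have hec : Continuous e := by fun_prop
  have hee : ∀ θ, e θ * ((Real.cos θ : ℂ) - Real.sin θ * I) = 1 := by
    intro θ
    have := Complex.cos_sq_add_sin_sq (θ : ℂ)
    simp only [he]
    push_cast
    linear_combination this - (Complex.sin θ)^2 * I_sq
  have hen : ∀ θ, ‖e θ‖ = 1 := by
    intro θ
    have h := Complex.norm_exp_ofReal_mul_I θ
    rw [Complex.exp_mul_I] at h
    simpa only [he, Complex.ofReal_cos, Complex.ofReal_sin] using h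
  have hed : ∀ θ, HasDerivAt e (I * e θ) θ := by
    intro θ
    have h1 := (Real.hasDerivAt_cos θ).ofReal_comp
    have h2 := ((Real.hasDerivAt_sin θ).ofReal_comp).mul_const I
    refine (h1.add h2).congr_deriv ?_
    simp only [he]; push_cast; linear_combination (-Complex.sin θ) * I_sq
  have hz : ∀ r θ, R < r → fderiv ℝ ψ (r * e θ) = 0 := by
    intro r θ hr
    by_contra h
    have := hR (subset_tsupport _ h)
    simp [hen] at this
    linarith [le_abs_self r]
  set A : ℝ × ℝ → ℂ := fun p => fderiv ℝ ψ (p.1 * e p.2) (e p.2) with hA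
  set B : ℝ × ℝ → ℂ := fun p => fderiv ℝ ψ (p.1 * e p.2) (I * e p.2) with hB
  have hpc : Continuous (fun p : ℝ × ℝ => fderiv ℝ ψ (p.1 * e p.2)) := by fun_prop
  have hAc : Continuous A := hpc.clm_apply (by fun_prop)
  have hBc : Continuous B := hpc.clm_apply (by fun_prop)
  have key : ∀ F : ℝ × ℝ → ℂ, Continuous F → (∀ p, R < p.1 → F p = 0) →
      IntegrableOn F (Set.Ioi 0 ×ˢ Set.Ioo (-Real.pi) Real.pi) (volume.prod volume) := by
    intro F hF h0
    have h1 : IntegrableOn F (Set.Icc 0 R ×ˢ Set.Icc (-Real.pi) Real.pi) (volume.prod volume) :=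
      hF.continuousOn.integrableOn_compact (isCompact_Icc.prod isCompact_Icc)
    refine h1.of_forall_sdiff_eq_zero (measurableSet_Ioi.prod measurableSet_Ioo) ?_
    rintro ⟨r, θ⟩ ⟨⟨hr, hθ⟩, h⟩
    apply h0
    by_contra! hr'
    exact h ⟨⟨le_of_lt hr, hr'⟩, ⟨hθ.1.le, hθ.2.le⟩⟩
  have hAi := key A hAc (by intro p hp; simp [hA, hz _ _ hp])
  have hBi := key B hBc (by intro p hp; simp [hB, hz _ _ hp])
  have hAint : ∫ p in Set.Ioi 0 ×ˢ Set.Ioo (-Real.pi) Real.pi, A p = -(2 * Real.pi) * ψ 0 := by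
    have h1 : ∀ θ, ∫ r in Set.Ioi (0:ℝ), A (r, θ) = - ψ 0 := by
      intro θ
      have hd1 : ∀ r : ℝ, HasDerivAt (fun r : ℝ => ψ (r * e θ)) (A (r, θ)) r := by
        intro r
        have h2 : HasDerivAt (fun r : ℝ => (r : ℂ) * e θ) (e θ) r := by
          simpa using (Complex.ofRealCLM.hasDerivAt (x := r)).mul_const (e θ)
        exact (hdiff _).hasFDerivAt.comp_hasDerivAt r h2
      have hce : Topology.IsClosedEmbedding (fun r : ℝ => (r : ℂ) * e θ) := by
        apply Isometry.isClosedEmbedding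
        apply Isometry.of_dist_eq
        intro x y
        rw [dist_eq_norm, ← sub_mul, norm_mul, hen, mul_one, ← dist_eq_norm, Complex.dist_of_im_eq (by simp)]
        simp
      have := HasCompactSupport.integral_Ioi_deriv_eq (f := fun r : ℝ => ψ (r * e θ))
        (hψ.comp (Complex.ofRealCLM.contDiff.mul contDiff_const)) (hc.comp_isClosedEmbedding hce) 0
      simp only [fun r => (hd1 r).deriv] at this
      simpa using this
    rw [Measure.volume_eq_prod, ← Measure.prod_restrict, integral_prod_symm]
    · simp only [h1]
      rw [setIntegral_const, Real.volume_real_Ioo_of_le (by linarith [Real.pi_pos]), Complex.real_smul]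
      push_cast
      ring
    · rw [Measure.prod_restrict]; exact hAi
  have hBint : ∫ p in Set.Ioi 0 ×ˢ Set.Ioo (-Real.pi) Real.pi, B p = 0 := by
    rw [Measure.volume_eq_prod, setIntegral_prod _ hBi]
    refine setIntegral_eq_zero_of_forall_eq_zero ?_
    intro r hr
    have hr0 : (r:ℂ) ≠ 0 := by exact_mod_cast (ne_of_gt hr)
    have hd1 : ∀ θ : ℝ, HasDerivAt (fun θ : ℝ => ψ (r * e θ)) (r * B (r, θ)) θ := by
      intro θ
      have h3 := (hdiff _).hasFDerivAt.comp_hasDerivAt θ ((hed θ).const_mul (r:ℂ))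
      refine h3.congr_deriv ?_
      change _ = (r:ℂ) * fderiv ℝ ψ (r * e θ) (I * e θ)
      symm
      rw [← Complex.real_smul, ← Complex.real_smul (x := r) (z := I * e θ), map_smul]
    have h4 := intervalIntegral.integral_eq_sub_of_hasDerivAt (a := -Real.pi) (b := Real.pi)
      (fun θ _ => hd1 θ) (Continuous.intervalIntegrable (by fun_prop) _ _)
    rw [intervalIntegral.integral_const_mul, intervalIntegral.integral_of_le (by linarith [Real.pi_pos]),
      integral_Ioc_eq_integral_Ioo] at h4
    have h5 : e Real.pi = e (-Real.pi) := by simp [he]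
    rw [h5, sub_self] at h4
    exact (mul_eq_zero.mp h4).resolve_left hr0
  rw [← Complex.integral_comp_polarCoord_symm, polarCoord_target]
  have : ∫ p in Set.Ioi 0 ×ˢ Set.Ioo (-Real.pi) Real.pi, (A p + I * B p) = -(2 * Real.pi) * ψ 0 := by
    rw [Measure.volume_eq_prod] at hAint hBint ⊢
    rw [integral_add hAi (hBi.const_mul I), integral_const_mul, hAint, hBint]; simp
  rw [← this]
  refine setIntegral_congr_fun (measurableSet_Ioi.prod measurableSet_Ioo) ?_
  rintro ⟨r, θ⟩ ⟨hr, -⟩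
  have hr0 : (r:ℂ) ≠ 0 := by exact_mod_cast (ne_of_gt hr)
  have hinv : (e θ)⁻¹ = (Real.cos θ : ℂ) - Real.sin θ * I := inv_eq_of_mul_eq_one_right (hee θ)
  simp only [Complex.polarCoord_symm_apply]
  change r • (((r:ℂ) * e θ)⁻¹ * (fderiv ℝ ψ (r * e θ) 1 + I * fderiv ℝ ψ (r * e θ) I)) =
    fderiv ℝ ψ (r * e θ) (e θ) + I * fderiv ℝ ψ (r * e θ) (I * e θ)
  generalize fderiv ℝ ψ (r * e θ) = T
  have t1 : T (e θ) = Real.cos θ * T 1 + Real.sin θ * T I := by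
    have : e θ = Real.cos θ • (1:ℂ) + Real.sin θ • I := by simp [he]
    rw [this, map_add, map_smul, map_smul]; simp
  have t2 : T (I * e θ) = Real.cos θ * T I - Real.sin θ * T 1 := by
    have : I * e θ = Real.cos θ • I - Real.sin θ • (1:ℂ) := by
      simp [he]; linear_combination (Complex.sin θ) * I_sq
    rw [this, map_sub, map_smul, map_smul]; simp
  rw [t1, t2, mul_inv, hinv, Complex.real_smul, ← mul_assoc, ← mul_assoc, mul_inv_cancel₀ hr0]
  linear_combination (-Real.sin θ * T I) * I_sq

lemma locInt_inv : LocallyIntegrable (fun w : ℂ => w⁻¹) := by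
  refine locallyIntegrable_of_norm_le_rpow (C := 1) (α := 1) (by simp) (by simp) ?_
    measurable_inv.aestronglyMeasurable
  filter_upwards with x
  simp [Real.rpow_neg_one]

lemma dbar_solve (φ : ℂ → ℂ) (hφ : ContDiff ℝ 1 φ) (hc : HasCompactSupport φ) :
    ∃ u : ℂ → ℂ, Differentiable ℝ u ∧
      (∀ z, fderiv ℝ u z 1 + I * fderiv ℝ u z I = φ z) ∧
      Tendsto u (cocompact ℂ) (nhds 0) := by
  have hdiff : Differentiable ℝ φ := hφ.differentiable one_ne_zero
  have hd : Continuous (fderiv ℝ φ) := hφ.continuous_fderiv one_ne_zero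
  have hdc : HasCompactSupport (fderiv ℝ φ) := hc.fderiv ℝ
  set v : ℂ → ℂ := convolution (fun w : ℂ => w⁻¹) φ (ContinuousLinearMap.mul ℝ ℂ) volume with hv
  have hvd := fun z => hc.hasFDerivAt_convolution_right (ContinuousLinearMap.mul ℝ ℂ)
    locInt_inv hφ z
  have hpi : (2 * Real.pi : ℂ) ≠ 0 := by simp [Real.pi_ne_zero]
  have hint : ∀ z a : ℂ, Integrable (fun t : ℂ => t⁻¹ * fderiv ℝ φ (z - t) a) := by
    intro z a
    have h1 : HasCompactSupport (fun t => fderiv ℝ φ t a) := hc.fderiv_apply ℝ a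
    exact h1.convolutionExists_right (ContinuousLinearMap.mul ℝ ℂ) locInt_inv
      (hd.clm_apply continuous_const) z
  have hval : ∀ z a : ℂ, fderiv ℝ v z a = ∫ t : ℂ, t⁻¹ * fderiv ℝ φ (z - t) a := by
    intro z a
    rw [(hvd z).fderiv, convolution_precompR_apply _ locInt_inv hdc hd]
    rfl
  have hvdiff : Differentiable ℝ v := fun z => (hvd z).differentiableAt
  have hvD : ∀ z, fderiv ℝ v z 1 + I * fderiv ℝ v z I = 2 * Real.pi * φ z := by
    intro z
    rw [hval, hval, ← integral_const_mul, ← integral_add (hint z 1) ((hint z I).const_mul I)]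
    have hψ : ContDiff ℝ 1 (fun w => φ (z - w)) := hφ.comp (contDiff_const.sub contDiff_id)
    have hψc : HasCompactSupport (fun w => φ (z - w)) :=
      hc.comp_homeomorph (Homeomorph.subLeft z)
    have := polar_aux _ hψ hψc
    have hf : ∀ w a, fderiv ℝ (fun w => φ (z - w)) w a = - fderiv ℝ φ (z - w) a := by
      intro w a
      have h1 : HasFDerivAt (fun w : ℂ => z - w) (-ContinuousLinearMap.id ℝ ℂ) w :=
        (hasFDerivAt_id w).const_sub z
      have h2 := (hdiff (z - w)).hasFDerivAt.comp w h1
      rw [show (fun w => φ (z - w)) = φ ∘ (fun w : ℂ => z - w) from rfl, h2.fderiv]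
      simp
    simp only [hf, sub_zero] at this
    rw [neg_mul, eq_comm, neg_eq_iff_eq_neg, ← integral_neg] at this
    rw [this]
    congr 1
    ext t
    ring
  refine ⟨fun z => (2 * Real.pi : ℂ)⁻¹ * v z, hvdiff.const_mul _, ?_, ?_⟩
  · intro z
    rw [fderiv_const_mul (hvdiff z)]
    have := hvD z
    simp only [_root_.smul_apply, smul_eq_mul]
    field_simp
    linear_combination this
  · have hv0 : Tendsto v (cocompact ℂ) (nhds 0) := by
      have hv2 : v = fun z => ∫ w : ℂ, (z - w)⁻¹ * φ w := by
        ext z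
        rw [← integral_sub_left_eq_self _ _ z]
        simp [hv, convolution]
      rw [hv2]
      obtain ⟨R, hR⟩ := hc.isCompact.isBounded.subset_closedBall 0
      have hlim : ∀ w : ℂ, Tendsto (fun z : ℂ => (z - w)⁻¹ * φ w) (cocompact ℂ) (nhds 0) := by
        intro w
        have h1 : Tendsto (fun z : ℂ => z - w) (cocompact ℂ) (cocompact ℂ) :=
          (Homeomorph.subRight w).isClosedEmbedding.tendsto_cocompact
        have h2 := (tendsto_inv₀_cobounded (α := ℂ))
        rw [Metric.cobounded_eq_cocompact] at h2
        simpa using (h2.comp h1).mul_const (φ w)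
      haveI : (cocompact ℂ).IsCountablyGenerated := by
        rw [← Metric.cobounded_eq_cocompact, ← comap_norm_atTop]
        infer_instance
      have := tendsto_integral_filter_of_dominated_convergence (μ := volume)
        (l := cocompact ℂ) (F := fun z w : ℂ => (z - w)⁻¹ * φ w) (f := fun _ => 0)
        (fun w => ‖φ w‖) (Eventually.of_forall fun z => ?_) ?_
        (hφ.continuous.integrable_of_hasCompactSupport hc).norm
        (Eventually.of_forall hlim)
      · simpa using this
      · exact ((measurable_const.sub measurable_id).inv.mul hφ.continuous.measurable).aestronglyMeasurable
      · have h3 : ∀ᶠ z in cocompact ℂ, R + 1 ≤ ‖z‖ :=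
          (tendsto_norm_cocompact_atTop (E := ℂ)).eventually_ge_atTop (R + 1)
        filter_upwards [h3] with z hz
        filter_upwards with w
        by_cases hw : φ w = 0
        · simp [hw]
        · have h4 := hR (subset_tsupport _ hw)
          rw [mem_closedBall_zero_iff] at h4
          have h5 : 1 ≤ ‖z - w‖ := by linarith [norm_sub_norm_le z w]
          rw [norm_mul, norm_inv]
          exact mul_le_of_le_one_left (norm_nonneg _) (inv_le_one_of_one_le₀ h5)
    simpa using hv0.const_mul (2 * Real.pi : ℂ)⁻¹

open scoped ContDiff in
lemma exists_cutoff (L U : Set ℂ) (hL : IsCompact L) (hU : IsOpen U) (hLU : L ⊆ U) :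
    ∃ χ : ℂ → ℂ, ContDiff ℝ ∞ χ ∧ HasCompactSupport χ ∧ tsupport χ ⊆ U ∧
      ∀ z ∈ L, χ =ᶠ[nhds z] fun _ => 1 := by
  obtain ⟨K, hK, hLK, hKU⟩ := exists_compact_between hL hU hLU
  obtain ⟨χ, h1, h0, -⟩ := exists_contMDiffMap_one_nhds_of_subset_interior
    (n := ⊤) (modelWithCornersSelf ℝ ℂ) hL.isClosed hLK
  have hs : tsupport (fun z => (χ z : ℂ)) ⊆ K := by
    refine closure_minimal ?_ hK.isClosed
    intro z hz
    by_contra h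
    exact hz (by simp [h0 z h])
  refine ⟨fun z => (χ z : ℂ), Complex.ofRealCLM.contDiff.comp χ.contMDiff.contDiff,
    HasCompactSupport.of_support_subset_isCompact hK (subset_closure.trans hs), hs.trans hKU, ?_⟩
  intro z hz
  have := (eventually_nhdsSet_iff_forall.mp h1) z hz
  filter_upwards [this] with w hw
  simp [hw]

lemma dbar_zero_of_differentiableAt {f : ℂ → ℂ} {z : ℂ} (h : DifferentiableAt ℂ f z) :
    fderiv ℝ f z 1 + I * fderiv ℝ f z I = 0 := by
  have := (differentiableAt_complex_iff_differentiableAt_real.mp h).2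
  rw [this, smul_eq_mul]
  linear_combination (fderiv ℝ f z 1) * I_sq

lemma differentiableAt_of_dbar_zero {f : ℂ → ℂ} {z : ℂ} (h : DifferentiableAt ℝ f z)
    (h0 : fderiv ℝ f z 1 + I * fderiv ℝ f z I = 0) : DifferentiableAt ℂ f z := by
  refine differentiableAt_complex_iff_differentiableAt_real.mpr ⟨h, ?_⟩
  rw [smul_eq_mul]
  linear_combination (-I) * h0 + (fderiv ℝ f z I) * I_sq

lemma removable_of_const (L : Set ℂ) (hL : IsCompact L) (U : Set ℂ) (hU : IsOpen U) (hLU : L ⊆ U)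
    (h : ∀ f : ℂ → ℂ, Continuous f → DifferentiableOn ℂ f Lᶜ →
        (∃ c : ℂ, Tendsto f (cocompact ℂ) (nhds c)) → ∀ z w : ℂ, f z = f w)
    (f : ℂ → ℂ) (hf : ContinuousOn f U) (hfd : DifferentiableOn ℂ f (U \ L)) :
    DifferentiableOn ℂ f U := by
  obtain ⟨χ, hχ, hχc, hχU, hχ1⟩ := exists_cutoff L U hL hU hLU
  have hχd : Differentiable ℝ χ := hχ.differentiable (by simp)
  have hUL : IsOpen (U \ L) := hU.sdiff hL.isClosed
  have hfat : ∀ z ∈ U \ L, DifferentiableAt ℂ f z := fun z hz =>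
    hfd.differentiableAt (hUL.mem_nhds hz)
  set φ : ℂ → ℂ := fun z => (fderiv ℝ χ z 1 + I * fderiv ℝ χ z I) * f z with hφdef
  have hχout : ∀ z ∉ U, χ =ᶠ[nhds z] fun _ => 0 := fun z hz =>
    notMem_tsupport_iff_eventuallyEq.mp (fun h' => hz (hχU h'))
  have hφL : ∀ z ∈ L, φ =ᶠ[nhds z] fun _ => 0 := by
    intro z hz
    filter_upwards [(hχ1 z hz).fderiv (𝕜 := ℝ)] with w hw
    simp [hφdef, hw]
  have hφout : ∀ z ∉ U, φ =ᶠ[nhds z] fun _ => 0 := by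
    intro z hz
    filter_upwards [(hχout z hz).fderiv (𝕜 := ℝ)] with w hw
    simp [hφdef, hw]
  have hφ : ContDiff ℝ 1 φ := by
    rw [contDiff_iff_contDiffAt]
    intro z
    by_cases hzU : z ∈ U
    · by_cases hzL : z ∈ L
      · exact contDiffAt_const.congr_of_eventuallyEq (hφL z hzL)
      · have h1 : ContDiffAt ℝ 1 f z :=
          ((hfd.analyticAt (hUL.mem_nhds ⟨hzU, hzL⟩)).contDiffAt (n := 1)).restrict_scalars ℝ
        have h2 : ContDiff ℝ 1 (fderiv ℝ χ) := hχ.fderiv_right (by norm_cast)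
        exact ((h2.clm_apply contDiff_const).add
          (contDiff_const.mul (h2.clm_apply contDiff_const))).contDiffAt.mul h1
    · exact contDiffAt_const.congr_of_eventuallyEq (hφout z hzU)
  have hφc : HasCompactSupport φ := by
    have h1 := (hχc.fderiv ℝ)
    refine h1.mono ?_
    intro z hz h0
    apply hz
    simp [hφdef, h0]
  obtain ⟨u, hud, huD, hu0⟩ := dbar_solve φ hφ hφc
  set F : ℂ → ℂ := fun z => χ z * f z with hF
  have hFout : ∀ z ∉ U, F =ᶠ[nhds z] fun _ => 0 := by
    intro z hz
    filter_upwards [hχout z hz] with w hw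
    simp [hF, hw]
  have hFc : Continuous F := by
    rw [continuous_iff_continuousAt]
    intro z
    by_cases hzU : z ∈ U
    · exact hχd.continuous.continuousAt.mul (hf.continuousAt (hU.mem_nhds hzU))
    · exact continuousAt_const.congr (hFout z hzU).symm
  have hFcs : HasCompactSupport F := hχc.mul_right
  have hF0 : Tendsto F (cocompact ℂ) (nhds 0) := by
    rw [hasCompactSupport_iff_eventuallyEq, coclosedCompact_eq_cocompact] at hFcs
    exact hFcs.tendsto
  have hFR : ∀ z ∉ L, DifferentiableAt ℝ F z ∧ fderiv ℝ F z 1 + I * fderiv ℝ F z I = φ z := by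
    intro z hzL
    by_cases hzU : z ∈ U
    · have h1 := hfat z ⟨hzU, hzL⟩
      have h2 := h1.restrictScalars ℝ
      refine ⟨(hχd z).mul h2, ?_⟩
      rw [hF, fderiv_fun_mul (hχd z) h2]
      have h3 := dbar_zero_of_differentiableAt h1
      simp only [hφdef, _root_.add_apply, _root_.smul_apply, smul_eq_mul]
      linear_combination χ z * h3
    · refine ⟨(differentiableAt_const _).congr_of_eventuallyEq (hFout z hzU), ?_⟩
      rw [(hFout z hzU).fderiv_eq, (hφout z hzU).self_of_nhds]
      simp
  have hconst := h (fun z => F z - u z) (hFc.sub hud.continuous) (by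
    intro z hz
    apply DifferentiableAt.differentiableWithinAt
    obtain ⟨h1, h2⟩ := hFR z hz
    refine differentiableAt_of_dbar_zero (h1.sub (hud z)) ?_
    rw [fderiv_fun_sub h1 (hud z)]
    simp only [_root_.sub_apply]
    linear_combination h2 - huD z) ⟨0, by simpa using hF0.sub hu0⟩
  intro z hzU
  apply DifferentiableAt.differentiableWithinAt
  by_cases hzL : z ∈ L
  · have h1 : DifferentiableAt ℂ u z := by
      refine differentiableAt_of_dbar_zero (hud z) ?_
      rw [huD, (hφL z hzL).self_of_nhds]
    refine (h1.add_const (F 0 - u 0)).congr_of_eventuallyEq ?_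
    filter_upwards [hχ1 z hzL] with w hw
    have := hconst w 0
    simp only [hF, hw] at this ⊢
    linear_combination this
  · exact hfat z ⟨hzU, hzL⟩

end Helpers

/-- Let `L ⊆ ℂ` be compact and `U ⊆ ℂ` open with `L ⊆ U`. Then every function
continuous on `ℂ`, holomorphic off `L`, with a finite limit at infinity is constant
(i.e. `a(L) = 0`) if and only if every function continuous on `U` and holomorphic on
`U \ L` is holomorphic on `U`. -/
theorem continuousAnalyticCapacity_zero_iff_removable
    (L : Set ℂ) (hL : IsCompact L) (U : Set ℂ) (hU : IsOpen U) (hLU : L ⊆ U) :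
    (∀ f : ℂ → ℂ, Continuous f → DifferentiableOn ℂ f Lᶜ →
        (∃ c : ℂ, Tendsto f (cocompact ℂ) (nhds c)) → ∀ z w : ℂ, f z = f w) ↔
    (∀ f : ℂ → ℂ, ContinuousOn f U → DifferentiableOn ℂ f (U \ L) →
        DifferentiableOn ℂ f U) := by
  refine ⟨removable_of_const L hL U hU hLU, ?_⟩
  rintro h f hf hfd ⟨c, hc⟩ z w
  have h1 := h f hf.continuousOn (hfd.mono fun x hx => hx.2)
  have h2 : Differentiable ℂ f := by
    intro x
    by_cases hx : x ∈ L
    · exact h1.differentiableAt (hU.mem_nhds (hLU hx))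
    · exact hfd.differentiableAt (hL.isClosed.isOpen_compl.mem_nhds hx)
  rw [h2.apply_eq_of_tendsto_cocompact z hc, h2.apply_eq_of_tendsto_cocompact w hc]
end

section
/- Let L be a closed subset of ℂ. Then the following are equivalent: (i) for every compact set M ⊆ L, every function f : ℂ → ℂ which is continuous on ℂ, holomorphic on ℂ∖M, and has a finite limit at infinity, is constant (i.e. the continuous analytic capacity a(L) is zero); (ii) for every open set U ⊆ ℂ, every function f which is continuous on U and holomorphic on U∖L is holomorphic on U. -/
open Filter

open MeasureTheory Complex

lemma aux_locInt : LocallyIntegrable (fun z : ℂ => z⁻¹) volume := by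
  rw [locallyIntegrable_iff]
  intro K hK
  obtain ⟨R, hR⟩ := hK.isBounded.subset_ball 0
  refine IntegrableOn.mono_set ?_ hR
  have h1 : Integrable (fun x : ℂ => (Set.indicator (Set.Iio R) (fun y : ℝ => y⁻¹)) ‖x‖) volume := by
    rw [integrable_fun_norm_addHaar]
    rw [Complex.finrank_real_complex]
    have : IntegrableOn (fun _ : ℝ => (1:ℝ)) (Set.Ioo 0 R) volume := by simp
    rw [← integrable_indicator_iff measurableSet_Ioo] at this
    refine this.integrableOn.congr_fun ?_ measurableSet_Ioi
    intro y hy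
    have hy' : 0 < y := hy
    by_cases h : y < R <;> simp [Set.indicator, h, hy', hy'.ne']
  have h2 := h1.integrableOn (s := Metric.ball 0 R)
  refine Integrable.mono h2 ?_ ?_
  · exact measurable_inv.aestronglyMeasurable
  · filter_upwards [ae_restrict_mem measurableSet_ball] with x hx
    have : ‖x‖ < R := by simpa using hx
    simp [Set.indicator, this]

/-- Unnormalised Cauchy transform. -/
noncomputable def cauchyT (h : ℂ → ℂ) (z : ℂ) : ℂ := ∫ w, h w * (z - w)⁻¹

lemma cauchyT_eq_conv (h : ℂ → ℂ) :
    cauchyT h = convolution (fun z : ℂ => z⁻¹) h (ContinuousLinearMap.mul ℂ ℂ) volume := by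
  ext z
  rw [convolution_def, cauchyT, ← integral_sub_left_eq_self _ volume z]
  simp [mul_comm]

lemma cauchyT_integrable {h : ℂ → ℂ} (hc : Continuous h) (hs : HasCompactSupport h) (z : ℂ) :
    Integrable (fun w => h w * (z - w)⁻¹) := by
  have := HasCompactSupport.convolutionExists_right (ContinuousLinearMap.mul ℂ ℂ) hs aux_locInt hc z
  unfold ConvolutionExistsAt at this
  have h2 := this.comp_sub_left z
  refine h2.congr ?_
  filter_upwards with w
  simp [mul_comm]

lemma cauchyT_continuous {h : ℂ → ℂ} (hc : Continuous h) (hs : HasCompactSupport h) :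
    Continuous (cauchyT h) := by
  rw [cauchyT_eq_conv]
  exact HasCompactSupport.continuous_convolution_right _ hs aux_locInt hc

lemma cauchyT_tendsto {h : ℂ → ℂ} (hc : Continuous h) (hs : HasCompactSupport h) :
    Tendsto (cauchyT h) (cocompact ℂ) (nhds 0) := by
  obtain ⟨R, hR⟩ := hs.isCompact.isBounded.subset_closedBall 0
  have hi : Integrable h := hc.integrable_of_hasCompactSupport hs
  have ht : Tendsto (fun z : ℂ => (∫ w, ‖h w‖) * (‖z‖ - R)⁻¹) (cocompact ℂ) (nhds 0) := by
    have h1 : Tendsto (fun z : ℂ => ‖z‖ - R) (cocompact ℂ) atTop :=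
      tendsto_atTop_add_const_right _ (-R) (tendsto_norm_cocompact_atTop (E := ℂ))
    simpa using (tendsto_inv_atTop_zero.comp h1).const_mul (∫ w, ‖h w‖)
  refine squeeze_zero_norm' ?_ ht
  have hev : ∀ᶠ z : ℂ in cocompact ℂ, R < ‖z‖ :=
    (tendsto_norm_cocompact_atTop (E := ℂ)).eventually (eventually_gt_atTop R)
  filter_upwards [hev] with z hz
  rw [← integral_mul_const]
  refine norm_integral_le_of_norm_le (hi.norm.mul_const _) ?_
  filter_upwards with w
  by_cases hw : h w = 0
  · simp [hw]
  · have : w ∈ Metric.closedBall (0:ℂ) R := hR (subset_tsupport _ hw)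
    have hw' : ‖w‖ ≤ R := by simpa using this
    rw [norm_mul, norm_inv]
    have h3 : ‖z‖ - R ≤ ‖z - w‖ := by linarith [norm_sub_norm_le z w]
    have h4 : 0 < ‖z‖ - R := by linarith
    gcongr

lemma cauchyT_diff {h : ℂ → ℂ} (hc : Continuous h) (hs : HasCompactSupport h) {a : ℂ}
    (ha : ∀ᶠ z in nhds a, h z = 0) : DifferentiableAt ℂ (cauchyT h) a := by
  obtain ⟨r, hr, hb⟩ := Metric.eventually_nhds_iff_ball.1 ha
  have hi : Integrable h := hc.integrable_of_hasCompactSupport hs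
  have key : ∀ w, ∀ x ∈ Metric.ball a (r/2), h w ≠ 0 → r / 2 ≤ ‖x - w‖ := by
    intro w x hx hw
    by_contra hcon
    apply hw
    apply hb
    have := dist_triangle w x a
    rw [dist_comm w x, dist_eq_norm x w] at this
    rw [Metric.mem_ball] at hx ⊢
    linarith
  have hm : ∀ x : ℂ, Measurable (fun w : ℂ => (x - w)⁻¹) := fun x =>
    (measurable_const.sub measurable_id).inv
  have := hasDerivAt_integral_of_dominated_loc_of_deriv_le (μ := volume) (𝕜 := ℂ)
    (F := fun z w => h w * (z - w)⁻¹) (F' := fun z w => h w * (-((z - w)⁻¹)^2)) (x₀ := a)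
    (bound := fun w => ‖h w‖ * ((r/2)⁻¹)^2)
    (Metric.ball_mem_nhds a (half_pos hr)) ?_ (cauchyT_integrable hc hs a) ?_ ?_ ?_ ?_
  · exact this.2.differentiableAt
  · exact Eventually.of_forall fun x => (hc.measurable.mul (hm x)).aestronglyMeasurable
  · exact (hc.measurable.mul ((hm a).pow_const 2).neg).aestronglyMeasurable
  · filter_upwards with w x hx
    by_cases hw : h w = 0
    · simp [hw]
    · have := key w x hx hw
      rw [norm_mul, norm_neg, norm_pow, norm_inv]
      gcongr
  · exact hi.norm.mul_const _
  · filter_upwards with w x hx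
    by_cases hw : h w = 0
    · simp only [hw, zero_mul]; exact hasDerivAt_const _ _
    · have := key w x hx hw
      have h0 : x - w ≠ 0 := by
        intro h0; rw [h0, norm_zero] at this; linarith
      have := (((hasDerivAt_id x).sub_const w).inv h0).const_mul (h w)
      refine HasDerivAt.congr_deriv (f' := h w * (-1 / (id x - w) ^ 2)) this ?_
      simp [div_eq_mul_inv]

/-- The d-bar operator. -/
noncomputable def dbar (u : ℂ → ℂ) (z : ℂ) : ℂ := (1/2) * (fderiv ℝ u z 1 + I * fderiv ℝ u z I)

lemma pompeiu_zero {v : ℂ → ℂ} (hv : ContDiff ℝ 1 v) (hs : HasCompactSupport v) :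
    ∫ w, dbar v w * w⁻¹ = - Real.pi * v 0 := by
  obtain ⟨R, hR⟩ := hs.isCompact.isBounded.subset_closedBall 0
  have hz : ∀ z, R < ‖z‖ → v z = 0 := by
    intro z hz
    by_contra h
    have := hR (subset_tsupport _ h)
    have : ‖z‖ ≤ R := by simpa using this
    linarith
  have hz' : ∀ z, R < ‖z‖ → fderiv ℝ v z = 0 := by
    intro z hz
    by_contra h
    have := hR (support_fderiv_subset ℝ h)
    have : ‖z‖ ≤ R := by simpa using this
    linarith
  have hcf : Continuous (fderiv ℝ v) := hv.continuous_fderiv (by norm_num)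
  have hd : Differentiable ℝ v := hv.differentiable (by norm_num)
  set e : ℝ → ℂ := fun θ => (Real.cos θ : ℂ) + Real.sin θ * I with he
  have hec : Continuous e := by fun_prop
  have hen : ∀ θ, ‖e θ‖ = 1 := by
    intro θ; simp only [he]
    simp
  set A : ℝ × ℝ → ℂ := fun p => fderiv ℝ v (p.1 * e p.2) (e p.2) with hA
  set B : ℝ × ℝ → ℂ := fun p => fderiv ℝ v (p.1 * e p.2) (I * e p.2) with hB
  have hAc : Continuous A := by
    apply Continuous.clm_apply
    · exact hcf.comp (by fun_prop)
    · fun_prop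
  have hBc : Continuous B := by
    apply Continuous.clm_apply
    · exact hcf.comp (by fun_prop)
    · fun_prop
  set T : Set (ℝ × ℝ) := Set.Ioi 0 ×ˢ Set.Ioo (-Real.pi) Real.pi with hT
  have hint : ∀ F : ℝ × ℝ → ℂ, Continuous F → (∀ r θ, 0 < r → R < r → F (r, θ) = 0) →
      IntegrableOn F T := by
    intro F hF h0
    have h1 : IntegrableOn F (Set.Icc 0 R ×ˢ Set.Icc (-Real.pi) Real.pi) :=
      hF.continuousOn.integrableOn_compact (isCompact_Icc.prod isCompact_Icc)
    refine h1.of_forall_sdiff_eq_zero (measurableSet_Ioi.prod measurableSet_Ioo) ?_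
    rintro ⟨r, θ⟩ ⟨⟨h2, h3⟩, h4⟩
    simp only [Set.mem_Ioi, Set.mem_Ioo] at h2 h3
    refine h0 r θ h2 ?_
    by_contra h5
    exact h4 ⟨⟨h2.le, not_lt.1 h5⟩, ⟨h3.1.le, h3.2.le⟩⟩
  have hnorm : ∀ r θ : ℝ, 0 < r → ‖(r:ℂ) * e θ‖ = r := by
    intro r θ hr
    rw [norm_mul, hen, mul_one, Complex.norm_real, Real.norm_of_nonneg hr.le]
  have hA0 : ∀ r θ, 0 < r → R < r → A (r, θ) = 0 := by
    intro r θ hr hRr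
    simp only [hA]
    rw [hz' _ (by rw [hnorm r θ hr]; exact hRr)]; rfl
  have hB0 : ∀ r θ, 0 < r → R < r → B (r, θ) = 0 := by
    intro r θ hr hRr
    simp only [hB]
    rw [hz' _ (by rw [hnorm r θ hr]; exact hRr)]; rfl
  have hAi := hint A hAc hA0
  have hBi := hint B hBc hB0
  have hintB : ∫ p in T, B p = 0 := by
    rw [hT, Measure.volume_eq_prod, setIntegral_prod _ hBi]
    refine setIntegral_eq_zero_of_forall_eq_zero ?_
    intro r hr
    have hr' : (0:ℝ) < r := hr
    rw [← integral_Ioc_eq_integral_Ioo,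
      ← intervalIntegral.integral_of_le (by linarith [Real.pi_pos])]
    have hder : ∀ θ : ℝ, HasDerivAt (fun θ : ℝ => (r:ℂ)⁻¹ * v (r * e θ)) (B (r, θ)) θ := by
      intro θ
      have h1 : HasDerivAt e (I * e θ) θ := by
        have h2 := (Real.hasDerivAt_cos θ).ofReal_comp
        have h3 := ((Real.hasDerivAt_sin θ).ofReal_comp).mul_const I
        refine HasDerivAt.congr_deriv (h2.add h3) ?_
        simp only [he]
        push_cast
        ring_nf
        rw [I_sq]; ring
      have h4 := (hd (r * e θ)).hasFDerivAt.comp_hasDerivAt θ (h1.const_mul (r:ℂ))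
      refine HasDerivAt.congr_deriv (h4.const_mul (r:ℂ)⁻¹) ?_
      simp only [hB]
      rw [← Complex.real_smul (x := r) (z := I * e θ), map_smul, Complex.real_smul, ← mul_assoc, inv_mul_cancel₀, one_mul]
      exact_mod_cast hr'.ne'
    rw [intervalIntegral.integral_eq_sub_of_hasDerivAt (fun θ _ => hder θ)]
    · simp [he]
    · exact (hBc.comp (by fun_prop)).intervalIntegrable _ _
  have hintA : ∫ p in T, A p = - (2 * Real.pi) * v 0 := by
    rw [hT, Measure.volume_eq_prod, ← setIntegral_prod_swap, setIntegral_prod]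
    · have : ∀ θ : ℝ, ∫ r in Set.Ioi (0:ℝ), A (r, θ) = - v 0 := by
        intro θ
        have hder : ∀ r : ℝ, HasDerivAt (fun r : ℝ => v (r * e θ)) (A (r, θ)) r := by
          intro r
          have h1 := ((hasDerivAt_id r).ofReal_comp).mul_const (e θ)
          have h4 := (hd (r * e θ)).hasFDerivAt.comp_hasDerivAt r h1
          simpa [Function.comp_def] using h4
        have hlim : Tendsto (fun r : ℝ => v (r * e θ)) atTop (nhds 0) := by
          refine tendsto_const_nhds.congr' ?_
          filter_upwards [eventually_gt_atTop 0, eventually_gt_atTop R] with r h1 h2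
          rw [hz]; rw [hnorm r θ h1]; exact h2
        have := integral_Ioi_of_hasDerivAt_of_tendsto (a := 0)
          (hder 0).continuousAt.continuousWithinAt (fun r _ => hder r) ?_ hlim
        · rw [this]; simp
        · have h1 : IntegrableOn (fun r => A (r, θ)) (Set.Icc 0 R) :=
            (hAc.comp (by fun_prop : Continuous fun r : ℝ => (r, θ))).continuousOn.integrableOn_compact isCompact_Icc
          refine h1.of_forall_sdiff_eq_zero measurableSet_Ioi ?_
          rintro r ⟨h2, h3⟩
          refine hA0 r θ h2 ?_
          by_contra h5
          exact h3 ⟨le_of_lt h2, not_lt.1 h5⟩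
      simp only [Prod.swap_prod_mk, this]
      rw [setIntegral_const]
      simp [Measure.real, Real.pi_pos.le, two_mul]
      ring
    · rw [← Measure.volume_eq_prod]
      exact hAi.swap
  have hmain : ∫ w, dbar v w * w⁻¹ = ∫ p in T, (1/2 : ℂ) * (A p + I * B p) := by
    rw [← Complex.integral_comp_polarCoord_symm, polarCoord_target]
    refine setIntegral_congr_fun (measurableSet_Ioi.prod measurableSet_Ioo) ?_
    rintro ⟨r, θ⟩ ⟨hr, -⟩
    have hr' : (0:ℝ) < r := hr
    have hrc : (r:ℂ) ≠ 0 := by exact_mod_cast hr'.ne'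
    have he0 : e θ ≠ 0 := by intro h; have := hen θ; rw [h] at this; simp at this
    simp only [Complex.polarCoord_symm_apply, hA, hB]
    change r • (dbar v (r * e θ) * (r * e θ)⁻¹) = _
    set D := fderiv ℝ v (r * e θ) with hD
    have hDe : D (e θ) = Real.cos θ * D 1 + Real.sin θ * D I := by
      have : e θ = (Real.cos θ) • (1:ℂ) + (Real.sin θ) • I := by simp [he]
      rw [this, map_add, map_smul, map_smul]; simp
    have hDI : D (I * e θ) = - Real.sin θ * D 1 + Real.cos θ * D I := by
      have : I * e θ = (-Real.sin θ) • (1:ℂ) + (Real.cos θ) • I := by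
        simp [he]; ring_nf; rw [I_sq]; ring
      rw [this, map_add, map_smul, map_smul]; simp
    have hinv : (e θ)⁻¹ = Real.cos θ - Real.sin θ * I := by
      rw [inv_eq_iff_eq_inv]
      apply eq_inv_of_mul_eq_one_left
      simp only [he]
      have : (Real.cos θ : ℂ)^2 + (Real.sin θ : ℂ)^2 = 1 := by exact_mod_cast Real.cos_sq_add_sin_sq θ
      linear_combination this - (Real.sin θ : ℂ)^2 * I_sq
    rw [hDe, hDI, mul_inv, hinv, dbar, ← hD, Complex.real_smul]
    field_simp
    linear_combination (- D I * Real.sin θ) * I_sq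
  rw [hmain, integral_const_mul, integral_add hAi (hBi.const_mul I), integral_const_mul, hintA, hintB]
  ring

lemma pompeiu {u : ℂ → ℂ} (hu : ContDiff ℝ 1 u) (hs : HasCompactSupport u) (z : ℂ) :
    cauchyT (dbar u) z = Real.pi * u z := by
  have h1 := pompeiu_zero (v := fun w => u (w + z)) (hu.comp (by fun_prop))
    (hs.comp_homeomorph (Homeomorph.addRight z))
  have h2 : ∀ w, dbar (fun w => u (w + z)) w = dbar u (w + z) := by
    intro w; simp [dbar, fderiv_comp_add_right]
  simp only [h2, zero_add] at h1
  rw [cauchyT, ← integral_add_right_eq_self _ z]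
  have : ∀ w : ℂ, dbar u (w + z) * (z - (w + z))⁻¹ = - (dbar u (w + z) * w⁻¹) := by
    intro w; rw [show z - (w + z) = -w by ring, inv_neg]; ring
  simp only [this, integral_neg, h1]
  ring

lemma dbar_continuous {u : ℂ → ℂ} (hu : ContDiff ℝ 1 u) : Continuous (dbar u) := by
  have hcf : Continuous (fderiv ℝ u) := hu.continuous_fderiv (by norm_num)
  unfold dbar
  fun_prop

lemma dbar_eventually_zero {u : ℂ → ℂ} {a c : ℂ} (hu : ∀ᶠ z in nhds a, u z = c) :
    ∀ᶠ z in nhds a, dbar u z = 0 := by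
  filter_upwards [hu.eventually_nhds] with z hz
  have : fderiv ℝ u z = 0 := by
    rw [Filter.EventuallyEq.fderiv_eq (show u =ᶠ[nhds z] fun _ => c from hz)]
    simp
  simp [dbar, this]

lemma dbar_eq_zero {u : ℂ → ℂ} {a c : ℂ} (hu : ∀ᶠ z in nhds a, u z = c) : dbar u a = 0 :=
  (dbar_eventually_zero hu).self_of_nhds

lemma dbar_tsupport (u : ℂ → ℂ) : tsupport (dbar u) ⊆ tsupport u := by
  intro a ha
  by_contra h
  rw [notMem_tsupport_iff_eventuallyEq] at h
  have := dbar_eventually_zero (c := 0) h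
  exact (notMem_tsupport_iff_eventuallyEq.2 this) ha

lemma dbar_mul {u v : ℂ → ℂ} {a : ℂ} (hu : DifferentiableAt ℝ u a) (hv : DifferentiableAt ℝ v a) :
    dbar (fun z => u z * v z) a = u a * dbar v a + v a * dbar u a := by
  simp only [dbar]
  rw [show (fun z => u z * v z) = u * v from rfl, fderiv_mul hu hv]
  simp
  ring

lemma dbar_holo {f : ℂ → ℂ} {a : ℂ} (hf : DifferentiableAt ℂ f a) : dbar f a = 0 := by
  have h := (hf.hasDerivAt.hasFDerivAt.restrictScalars ℝ).fderiv
  simp only [dbar, h]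
  simp
  rw [← mul_assoc, I_mul_I]
  ring

lemma cont_mul_of_tsupport {U : Set ℂ} (hU : IsOpen U) {f ψ : ℂ → ℂ} (hf : ContinuousOn f U)
    (hψ : Continuous ψ) (hs : tsupport ψ ⊆ U) : Continuous (fun z => f z * ψ z) := by
  refine continuous_of_tsupport fun x hx => ?_
  have hx' : x ∈ U := hs (tsupport_mul_subset_right hx)
  exact (hf.continuousAt (hU.mem_nhds hx')).mul hψ.continuousAt

lemma exists_bump {U : Set ℂ} (hU : IsOpen U) {a : ℂ} (ha : a ∈ U) :
    ∃ φ : ℂ → ℂ, ContDiff ℝ 1 φ ∧ HasCompactSupport φ ∧ tsupport φ ⊆ U ∧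
      ∀ᶠ z in nhds a, φ z = 1 := by
  obtain ⟨r, hr, hb⟩ := Metric.nhds_basis_closedBall.mem_iff.1 (hU.mem_nhds ha)
  let φ : ContDiffBump a := ⟨r/2, r, half_pos hr, half_lt_self hr⟩
  have hsub : tsupport (fun z => (φ z : ℂ)) ⊆ tsupport φ :=
    closure_mono fun z hz h => hz (by simp only [h, ofReal_zero])
  refine ⟨fun z => (φ z : ℂ), ?_, ?_, ?_, ?_⟩
  · exact Complex.ofRealCLM.contDiff.comp φ.contDiff
  · exact φ.hasCompactSupport.of_isClosed_subset (isClosed_tsupport _) hsub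
  · refine hsub.trans ?_
    rw [φ.tsupport_eq]; exact hb
  · filter_upwards [φ.eventuallyEq_one] with z hz
    simp [hz]

lemma diff_localized {U L : Set ℂ} (hU : IsOpen U) (hL : IsClosed L) {f φ : ℂ → ℂ}
    (hf : ContinuousOn f U) (hd : DifferentiableOn ℂ f (U \ L)) (hφ : ContDiff ℝ 1 φ)
    (hφc : HasCompactSupport φ) (hφU : tsupport φ ⊆ U) {a : ℂ} (ha : a ∉ L ∩ tsupport φ) :
    DifferentiableAt ℂ
      (fun z => f z * φ z - (Real.pi : ℂ)⁻¹ * cauchyT (fun w => f w * dbar φ w) z) a := by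
  have hpi : (Real.pi : ℂ) ≠ 0 := by exact_mod_cast Real.pi_ne_zero
  have hdc : HasCompactSupport (dbar φ) :=
    hφc.of_isClosed_subset (isClosed_tsupport _) (dbar_tsupport φ)
  have hh : Continuous (fun w => f w * dbar φ w) :=
    cont_mul_of_tsupport hU hf (dbar_continuous hφ) ((dbar_tsupport φ).trans hφU)
  have hhc : HasCompactSupport (fun w => f w * dbar φ w) := hdc.mul_left
  by_cases hat : a ∈ tsupport φ
  · have haL : a ∉ L := fun h => ha ⟨h, hat⟩
    have hV : IsOpen (U \ L) := hU.sdiff hL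
    obtain ⟨χ, hχ, hχc, hχV, hχ1⟩ := exists_bump hV (⟨hφU hat, haL⟩ : a ∈ U \ L)
    have hdχc : HasCompactSupport (dbar χ) :=
      hχc.of_isClosed_subset (isClosed_tsupport _) (dbar_tsupport χ)
    set u : ℂ → ℂ := fun z => (f z * φ z) * χ z with hu
    set k : ℂ → ℂ := fun z => f z * (φ z * dbar χ z) with hk
    set h1 : ℂ → ℂ := fun z => χ z * (f z * dbar φ z) with hh1
    set h2 : ℂ → ℂ := fun z => (1 - χ z) * (f z * dbar φ z) with hh2
    have huc : HasCompactSupport u := hχc.mul_left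
    have hfR : ∀ z ∈ U \ L, ContDiffAt ℝ 1 f z := fun z hz =>
      ((hd.contDiffOn hV).contDiffAt (hV.mem_nhds hz)).restrict_scalars ℝ
    have hud : ContDiff ℝ 1 u := by
      refine contDiff_iff_contDiffAt.2 fun x => ?_
      by_cases hx : x ∈ tsupport u
      swap
      · rw [notMem_tsupport_iff_eventuallyEq] at hx
        exact contDiffAt_const.congr_of_eventuallyEq hx
      have hx' : x ∈ U \ L := hχV (tsupport_mul_subset_right hx)
      exact ((hfR x hx').mul hφ.contDiffAt).mul hχ.contDiffAt
    have hkc : Continuous k := by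
      refine cont_mul_of_tsupport hU hf (hφ.continuous.mul (dbar_continuous hχ)) ?_
      exact (tsupport_mul_subset_left (f := φ)).trans hφU
    have hks : HasCompactSupport k := (hφc.mul_right (f' := dbar χ)).mul_left
    have h1c : Continuous h1 := hχ.continuous.mul hh
    have h1s : HasCompactSupport h1 := hhc.mul_left
    have h2c : Continuous h2 := (continuous_const.sub hχ.continuous).mul hh
    have h2s : HasCompactSupport h2 := hhc.mul_left
    have hdb : ∀ w, dbar u w = h1 w + k w := by
      intro w
      by_cases hw : w ∈ U \ L
      · have hfd : DifferentiableAt ℂ f w := hd.differentiableAt (hV.mem_nhds hw)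
        have hfd' : DifferentiableAt ℝ f w := hfd.restrictScalars ℝ
        have hφd : DifferentiableAt ℝ φ w := hφ.differentiable (by norm_num) w
        have hχd : DifferentiableAt ℝ χ w := hχ.differentiable (by norm_num) w
        rw [hu, dbar_mul (u := fun z => f z * φ z) (hfd'.mul hφd) hχd, dbar_mul hfd' hφd, dbar_holo hfd]
        simp only [hh1, hk]
        ring
      · have hw' : w ∉ tsupport χ := fun h => hw (hχV h)
        rw [notMem_tsupport_iff_eventuallyEq] at hw'
        have e1 : dbar χ w = 0 := dbar_eq_zero (c := 0) hw'
        have e2 : dbar u w = 0 := by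
          refine dbar_eq_zero (c := 0) ?_
          filter_upwards [hw'] with z hz
          simp [hu, hz]
        have e3 : χ w = 0 := hw'.self_of_nhds
        simp [hh1, hk, e1, e2, e3]
    have eq1 : ∀ z, (Real.pi : ℂ) * u z = cauchyT h1 z + cauchyT k z := by
      intro z
      rw [← pompeiu hud huc z]
      simp only [cauchyT]
      rw [← integral_add (cauchyT_integrable h1c h1s z) (cauchyT_integrable hkc hks z)]
      simp only [hdb, add_mul]
    have eq2 : ∀ z, cauchyT (fun w => f w * dbar φ w) z = cauchyT h1 z + cauchyT h2 z := by
      intro z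
      simp only [cauchyT]
      rw [← integral_add (cauchyT_integrable h1c h1s z) (cauchyT_integrable h2c h2s z)]
      congr 1
      ext w
      simp only [hh1, hh2]
      ring
    have dk : DifferentiableAt ℂ (cauchyT k) a := by
      refine cauchyT_diff hkc hks ?_
      filter_upwards [dbar_eventually_zero hχ1] with z hz
      simp [hk, hz]
    have d2 : DifferentiableAt ℂ (cauchyT h2) a := by
      refine cauchyT_diff h2c h2s ?_
      filter_upwards [hχ1] with z hz
      simp [hh2, hz]
    refine ((dk.sub d2).const_mul (Real.pi : ℂ)⁻¹).congr_of_eventuallyEq ?_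
    filter_upwards [hχ1] with z hz
    have e1 := eq1 z
    have e3 : u z = f z * φ z := by simp [hu, hz]
    rw [eq2 z, ← e3]
    simp only [Pi.sub_apply]
    field_simp
    linear_combination e1
  · rw [notMem_tsupport_iff_eventuallyEq] at hat
    have hhd := (cauchyT_diff hh hhc (a := a) (by
      filter_upwards [dbar_eventually_zero (c := 0) hat] with z hz
      simp [hz])).const_mul (Real.pi : ℂ)⁻¹
    refine hhd.neg.congr_of_eventuallyEq ?_
    filter_upwards [hat] with z hz
    simp [hz]

/-- Let `L ⊆ ℂ` be closed. Then for every compact `M ⊆ L` every function continuous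
on `ℂ`, holomorphic off `M`, with a finite limit at infinity is constant (i.e.
`a(L) = 0`) if and only if for every open `U ⊆ ℂ` every function continuous on `U`
and holomorphic on `U \ L` is holomorphic on `U`. -/
theorem continuousAnalyticCapacity_zero_iff_removable_closed
    (L : Set ℂ) (hL : IsClosed L) :
    (∀ M : Set ℂ, IsCompact M → M ⊆ L →
      ∀ f : ℂ → ℂ, Continuous f → DifferentiableOn ℂ f Mᶜ →
        (∃ c : ℂ, Tendsto f (cocompact ℂ) (nhds c)) → ∀ z w : ℂ, f z = f w) ↔
    (∀ U : Set ℂ, IsOpen U →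
      ∀ f : ℂ → ℂ, ContinuousOn f U → DifferentiableOn ℂ f (U \ L) →
        DifferentiableOn ℂ f U) := by
  constructor
  · intro H U hU f hf hd z₀ hz₀
    obtain ⟨φ, hφ, hφc, hφU, hφ1⟩ := exists_bump hU hz₀
    have hh : Continuous (fun w => f w * dbar φ w) :=
      cont_mul_of_tsupport hU hf (dbar_continuous hφ) ((dbar_tsupport φ).trans hφU)
    have hdc : HasCompactSupport (dbar φ) :=
      hφc.of_isClosed_subset (isClosed_tsupport _) (dbar_tsupport φ)
    have hhc : HasCompactSupport (fun w => f w * dbar φ w) := hdc.mul_left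
    have hfφ : Continuous (fun z => f z * φ z) := cont_mul_of_tsupport hU hf hφ.continuous hφU
    have hfφc : HasCompactSupport (fun z => f z * φ z) := hφc.mul_left
    have hconst := H (L ∩ tsupport φ) (hφc.isCompact.inter_left hL) Set.inter_subset_left
      (fun z => f z * φ z - (Real.pi : ℂ)⁻¹ * cauchyT (fun w => f w * dbar φ w) z)
      (hfφ.sub (continuous_const.mul (cauchyT_continuous hh hhc)))
      (fun a ha => (diff_localized hU hL hf hd hφ hφc hφU ha).differentiableWithinAt)
      ⟨0, by
        have h1 : Tendsto (fun z => f z * φ z) (cocompact ℂ) (nhds 0) := hfφc.is_zero_at_infty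
        simpa using h1.sub ((cauchyT_tendsto hh hhc).const_mul (Real.pi : ℂ)⁻¹)⟩
    have hhd := (cauchyT_diff hh hhc (a := z₀) (by
      filter_upwards [dbar_eventually_zero hφ1] with z hz
      simp [hz])).const_mul (Real.pi : ℂ)⁻¹
    refine DifferentiableAt.differentiableWithinAt ?_
    refine (hhd.add_const (f z₀ * φ z₀ -
      (Real.pi : ℂ)⁻¹ * cauchyT (fun w => f w * dbar φ w) z₀)).congr_of_eventuallyEq ?_
    filter_upwards [hφ1] with z hz
    have h3 := hconst z z₀
    simp only [hz] at h3
    linear_combination h3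
  · intro H M _ hML f hf hd hlim z w
    obtain ⟨c, hc⟩ := hlim
    have h1 := H Set.univ isOpen_univ f hf.continuousOn
      (hd.mono fun x hx hxM => hx.2 (hML hxM))
    rw [differentiableOn_univ] at h1
    rw [h1.apply_eq_of_tendsto_cocompact z hc, h1.apply_eq_of_tendsto_cocompact w hc]
end

section
/- Let L be a compact subset of ℂ, let Ω = ℂ∖L, and let p ∈ {1,2,...} ∪ {∞}. Then every f ∈ Ã^p(Ω ∪ {∞}) is constant (i.e. the capacity ã_p(L) is zero) if and only if L has empty interior in ℂ. -/
open Filter Set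

/-- `f` belongs to the Whitney-type class `Ã^p(Ω ∪ {∞})` for `Ω = ℂ \ L`:
`f` is holomorphic on `Ω`, has a finite limit at infinity, for every integer `j ≤ p`
the derivative `f⁽ʲ⁾` extends continuously (as `g j`) to the closure of `Ω` in `ℂ`,
and the Whitney condition
`g j w − Σ_{k=0}^{j'−j} (1/k!) g (j+k) z (w−z)^k = o(|w−z|^{j'−j})` as `w → z` holds
uniformly for `z, w` in compact subsets of the closure of `Ω`, for all `j ≤ j' ≤ p`. -/
def MemATildeInf (p : ℕ∞) (L : Set ℂ) (f : ℂ → ℂ) : Prop :=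
  DifferentiableOn ℂ f Lᶜ ∧
  (∃ c : ℂ, Tendsto f (cocompact ℂ) (nhds c)) ∧
  ∃ g : ℕ → ℂ → ℂ,
    (∀ j : ℕ, (j : ℕ∞) ≤ p →
      ContinuousOn (g j) (closure Lᶜ) ∧ Set.EqOn (g j) (iteratedDeriv j f) Lᶜ) ∧
    (∀ j j' : ℕ, j ≤ j' → (j' : ℕ∞) ≤ p →
      ∀ K : Set ℂ, K ⊆ closure Lᶜ → IsCompact K →
        ∀ ε : ℝ, 0 < ε → ∃ δ : ℝ, 0 < δ ∧
          ∀ z ∈ K, ∀ w ∈ K, ‖w - z‖ < δ →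
            ‖g j w - ∑ k ∈ Finset.range (j' - j + 1),
                (1 / (Nat.factorial k : ℂ)) * g (j + k) z * (w - z) ^ k‖
              ≤ ε * ‖w - z‖ ^ (j' - j))

/-- The derivatives of `1 / (z - a)`. -/
noncomputable def cauchyDer (a : ℂ) (j : ℕ) (z : ℂ) : ℂ :=
  (-1) ^ j * (Nat.factorial j : ℂ) * ((z - a) ^ (j + 1))⁻¹

lemma cauchyDer_hasDerivAt (a : ℂ) (j : ℕ) (z : ℂ) (hz : z ≠ a) :
    HasDerivAt (cauchyDer a j) (cauchyDer a (j + 1) z) z := by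
  have hz' : z - a ≠ 0 := sub_ne_zero.mpr hz
  have h1 : HasDerivAt (fun x : ℂ => x - a) 1 z := (hasDerivAt_id z).sub_const a
  have h2 := ((h1.fun_pow (j + 1)).fun_inv (pow_ne_zero _ hz')).const_mul
    ((-1 : ℂ) ^ j * (Nat.factorial j : ℂ))
  unfold cauchyDer
  refine h2.congr_deriv ?_
  rw [Nat.factorial_succ]
  rw [Nat.add_sub_cancel]
  push_cast
  field_simp
  ring_nf

lemma cauchyDer_iter (a : ℂ) (j : ℕ) :
    ∀ z : ℂ, z ≠ a → iteratedDeriv j (cauchyDer a 0) z = cauchyDer a j z := by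
  induction j with
  | zero => intro z _; simp
  | succ j ih =>
    intro z hz
    rw [iteratedDeriv_succ]
    have : iteratedDeriv j (cauchyDer a 0) =ᶠ[nhds z] cauchyDer a j := by
      filter_upwards [isOpen_ne.mem_nhds hz] with x hx using ih x hx
    rw [this.deriv_eq]
    exact (cauchyDer_hasDerivAt a j z hz).deriv

lemma cauchyDer_taylor (a : ℂ) (r : ℝ) (hr : 0 < r) (n : ℕ) :
    ∀ j : ℕ, ∃ C : ℝ, 0 ≤ C ∧ ∀ z w : ℂ, r ≤ ‖z - a‖ → ‖w - z‖ < r / 2 →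
      ‖cauchyDer a j w - ∑ k ∈ Finset.range n,
        (1 / (Nat.factorial k : ℂ)) * cauchyDer a (j + k) z * (w - z) ^ k‖
        ≤ C * ‖w - z‖ ^ n := by
  have hdist : ∀ z w : ℂ, r ≤ ‖z - a‖ → ‖w - z‖ < r / 2 → r / 2 ≤ ‖w - a‖ := by
    intro z w h1 h2
    have h3 : ‖z - a‖ ≤ ‖w - a‖ + ‖w - z‖ := by
      have := norm_sub_le (w - a) (w - z)
      simpa using this
    linarith
  induction n with
  | zero =>
    intro j
    refine ⟨(Nat.factorial j : ℝ) * ((r / 2) ^ (j + 1))⁻¹, by positivity, ?_⟩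
    intro z w h1 h2
    have h3 := hdist z w h1 h2
    simp only [Finset.range_zero, Finset.sum_empty, sub_zero, pow_zero, mul_one, cauchyDer]
    simp only [norm_mul, norm_pow, norm_neg, norm_one, one_pow, one_mul, norm_inv,
      Complex.norm_natCast]
    gcongr
  | succ n ih =>
    intro j
    obtain ⟨C, hC, h⟩ := ih (j + 1)
    refine ⟨C, hC, ?_⟩
    intro z w h1 h2
    have hmv := (convex_closedBall z ‖w - z‖).norm_image_sub_le_of_norm_hasDerivWithin_le
      (f := fun x => cauchyDer a j x - ∑ k ∈ Finset.range (n + 1),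
        (1 / (Nat.factorial k : ℂ)) * cauchyDer a (j + k) z * (x - z) ^ k)
      (f' := fun x => cauchyDer a (j + 1) x - ∑ k ∈ Finset.range n,
        (1 / (Nat.factorial k : ℂ)) * cauchyDer a (j + 1 + k) z * (x - z) ^ k)
      (C := C * ‖w - z‖ ^ n) (x := z) (y := w) ?_ ?_ ?_ ?_
    · have hz0 : ∑ k ∈ Finset.range (n + 1),
          (1 / (Nat.factorial k : ℂ)) * cauchyDer a (j + k) z * (z - z) ^ k
            = cauchyDer a j z := by
        rw [Finset.sum_range_succ']
        simp
      simp only [hz0] at hmv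
      rw [sub_self, sub_zero] at hmv
      rw [pow_succ, ← mul_assoc]
      exact hmv
    · intro x hx
      rw [mem_closedBall_iff_norm] at hx
      have hx2 : ‖x - z‖ < r / 2 := lt_of_le_of_lt hx h2
      have hxa : x ≠ a := by
        rintro rfl
        have := hdist z x h1 hx2
        simp at this
        linarith
      apply HasDerivAt.hasDerivWithinAt
      apply (cauchyDer_hasDerivAt a j x hxa).sub
      have hs : ∀ k ∈ Finset.range (n + 1), HasDerivAt
          (fun x : ℂ => (1 / (Nat.factorial k : ℂ)) * cauchyDer a (j + k) z * (x - z) ^ k)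
          ((1 / (Nat.factorial k : ℂ)) * cauchyDer a (j + k) z *
            ((k : ℂ) * (x - z) ^ (k - 1) * 1)) x := by
        intro k _
        exact ((((hasDerivAt_id x).sub_const z).fun_pow k)).const_mul _
      have hsum := HasDerivAt.fun_sum hs
      convert hsum using 1
      rw [Finset.sum_range_succ']
      simp only [Nat.cast_zero, zero_mul, mul_zero, add_zero, mul_one, Nat.add_sub_cancel]
      apply Finset.sum_congr rfl
      intro k _
      rw [Nat.factorial_succ, show j + 1 + k = j + (k + 1) by ring]
      have : (Nat.factorial k : ℂ) ≠ 0 := by exact_mod_cast Nat.factorial_ne_zero k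
      have h' : (k : ℂ) + 1 ≠ 0 := by exact_mod_cast Nat.succ_ne_zero k
      push_cast
      field_simp
    · intro x hx
      rw [mem_closedBall_iff_norm] at hx
      refine (h z x h1 (lt_of_le_of_lt hx h2)).trans ?_
      gcongr
    · simp
    · exact mem_closedBall_iff_norm.mpr le_rfl

lemma cauchyDer_mem (p : ℕ∞) (L : Set ℂ) (a : ℂ) (ha : a ∈ interior L) :
    MemATildeInf p L (cauchyDer a 0) := by
  obtain ⟨r, hr, hball⟩ := Metric.isOpen_iff.mp isOpen_interior a ha
  have hcl : ∀ z ∈ closure Lᶜ, r ≤ ‖z - a‖ := by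
    intro z hz
    rw [closure_compl] at hz
    by_contra hlt
    exact hz (hball (by rw [mem_ball_iff_norm]; linarith))
  have hne : ∀ z ∈ closure Lᶜ, z ≠ a := by
    rintro z hz rfl
    have := hcl z hz
    simp at this
    linarith
  refine ⟨?_, ⟨0, ?_⟩, cauchyDer a, ?_, ?_⟩
  · intro z hz
    exact (cauchyDer_hasDerivAt a 0 z (hne z (subset_closure hz))).differentiableAt.differentiableWithinAt
  · have h1 : Tendsto (fun z : ℂ => z - a) (cocompact ℂ) (cocompact ℂ) := by
      simpa using (Homeomorph.subRight a).isClosedEmbedding.tendsto_cocompact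
    have h2 : Tendsto (fun z : ℂ => (z - a)⁻¹) (cocompact ℂ) (nhds 0) :=
      (tendsto_inv₀_cobounded (α := ℂ)).comp (by simpa [Metric.cobounded_eq_cocompact] using h1)
    refine h2.congr ?_
    intro z
    simp [cauchyDer]
  · intro j _
    refine ⟨?_, ?_⟩
    · intro z hz
      exact (cauchyDer_hasDerivAt a j z (hne z hz)).continuousAt.continuousWithinAt
    · intro z hz
      exact (cauchyDer_iter a j z (hne z (subset_closure hz))).symm
  · intro j j' _ _ K hK _ ε hε
    obtain ⟨C, hC, h⟩ := cauchyDer_taylor a r hr (j' - j + 1) j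
    refine ⟨min (r / 2) (ε / (C + 1)), by positivity, ?_⟩
    intro z hz w _ hzw
    refine (h z w (hcl z (hK hz)) (lt_of_lt_of_le hzw (min_le_left _ _))).trans ?_
    have h3 : ‖w - z‖ < ε / (C + 1) := lt_of_lt_of_le hzw (min_le_right _ _)
    rw [lt_div_iff₀ (by positivity)] at h3
    rw [pow_succ, mul_comm (‖w - z‖ ^ (j' - j)), ← mul_assoc]
    have h4 := norm_nonneg (w - z)
    gcongr
    nlinarith

/-- Let `L ⊆ ℂ` be compact, `Ω = ℂ \ L`, and `p ∈ {1,2,...} ∪ {∞}`. Then every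
`f ∈ Ã^p(Ω ∪ {∞})` is constant (i.e. `ã_p(L) = 0`) iff `L` has empty interior. -/
theorem aTildeCapacity_zero_iff_empty_interior
    (p : ℕ∞) (hp : 1 ≤ p) (L : Set ℂ) (hL : IsCompact L) :
    (∀ f : ℂ → ℂ, MemATildeInf p L f → ∃ c : ℂ, ∀ z ∈ Lᶜ, f z = c) ↔
    interior L = ∅ := by
  constructor
  · intro H
    by_contra hne
    obtain ⟨a, ha⟩ := Set.nonempty_iff_ne_empty.mpr hne
    obtain ⟨c, hc⟩ := H _ (cauchyDer_mem p L a ha)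
    obtain ⟨R, hR⟩ := hL.isBounded.subset_closedBall a
    have hmem : ∀ t : ℝ, |R| < t → a + (t : ℂ) ∈ Lᶜ := by
      intro t ht hmem
      have := hR hmem
      rw [mem_closedBall_iff_norm] at this
      simp at this
      have h1 := le_abs_self R
      have h2 := le_abs_self t
      linarith
    have h1 := hc _ (hmem (|R| + 1) (by linarith))
    have h2 := hc _ (hmem (|R| + 2) (by linarith))
    rw [← h2] at h1
    simp only [cauchyDer, pow_zero, Nat.factorial_zero, Nat.cast_one, one_mul, zero_add, pow_one,
      add_sub_cancel_left, inv_inj, Complex.ofReal_inj] at h1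
    linarith
  · intro hint f hf
    obtain ⟨_, ⟨c, hc⟩, g, hg, hw⟩ := hf
    have hcl : closure Lᶜ = Set.univ := by rw [closure_compl, hint, Set.compl_empty]
    have h0 := hg 0 (by simp)
    have hEq : ∀ z ∈ Lᶜ, g 0 z = f z := by
      intro z hz
      simpa using h0.2 hz
    have hd : Differentiable ℂ (g 0) := by
      intro z
      have : HasDerivAt (g 0) (g 1 z) z := by
        rw [hasDerivAt_iff_isLittleO, Asymptotics.isLittleO_iff]
        intro ε hε
        obtain ⟨δ, hδ, h⟩ := hw 0 1 (by norm_num) (by simpa using hp) (Metric.closedBall z 1)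
          (by rw [hcl]; exact Set.subset_univ _) (isCompact_closedBall z 1) ε hε
        filter_upwards [Metric.ball_mem_nhds z hδ, Metric.closedBall_mem_nhds z one_pos] with w h1 h2
        have := h z (by simp) w h2 (by rwa [mem_ball_iff_norm] at h1)
        simp [Finset.sum_range_succ] at this
        rw [smul_eq_mul, mul_comm (w - z), sub_sub]
        exact this
      exact this.differentiableAt
    have ht : Tendsto (g 0) (cocompact ℂ) (nhds c) := by
      refine hc.congr' ?_
      filter_upwards [hL.compl_mem_cocompact] with z hz using (hEq z hz).symm
    refine ⟨c, fun z hz => ?_⟩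
    rw [← hEq z hz]
    exact hd.apply_eq_of_tendsto_cocompact z ht
end

section
/- Let L ⊆ ℂ be a compact set of zero two-dimensional Lebesgue measure such that for almost every a ∈ ℝ the horizontal line {z ∈ ℂ : Im z = a} does not intersect L, and for almost every b ∈ ℝ the vertical line {z ∈ ℂ : Re z = b} does not intersect L. Then every function f holomorphic on ℂ∖L, such that f and its derivative f′ extend continuously to the closure of ℂ∖L in ℂ and f has a finite limit at infinity, is constant; that is, the 1-continuous analytic capacity a_1(L) is zero. -/
open Filter Set MeasureTheory

lemma aux_line (L : Set ℂ) (g h : ℂ → ℂ) (hg : Continuous g)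
    (hd : ∀ z ∈ Lᶜ, HasDerivAt g (h z) z) (u : ℂ) (D : Set ℂ) (hD : Dense D)
    (hDL : ∀ p ∈ D, ∀ t : ℝ, p + t * u ∈ Lᶜ) (z₀ : ℂ) (r ε : ℝ)
    (hr : ∀ z ∈ Metric.ball z₀ r, ‖h z - h z₀‖ ≤ ε)
    (p : ℂ) (t : ℝ) (hp : p ∈ Metric.ball z₀ r) (hq : p + t * u ∈ Metric.ball z₀ r) :
    ‖g (p + t * u) - g p - h z₀ * (t * u)‖ ≤ ε * ‖t * u‖ := by
  have key : ∀ p ∈ D, p ∈ Metric.ball z₀ r → p + t * u ∈ Metric.ball z₀ r →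
      ‖g (p + t * u) - g p - h z₀ * (t * u)‖ ≤ ε * ‖t * u‖ := by
    intro p hpD hp hq
    have hder : ∀ s ∈ Icc (0:ℝ) 1, HasDerivWithinAt
        (fun s : ℝ => g (p + s * (t * u)) - h z₀ * (s * (t * u)))
        (h (p + s * (t * u)) * (t * u) - h z₀ * (t * u)) (Icc 0 1) s := by
      intro s _
      apply HasDerivAt.hasDerivWithinAt
      have h0 : HasDerivAt (fun s : ℝ => (s : ℂ) * (t * u)) (t * u) s := by
        simpa using (Complex.ofRealCLM.hasDerivAt (x := s)).mul_const ((t : ℂ) * u)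
      have h1 : HasDerivAt (fun s : ℝ => p + (s : ℂ) * (t * u)) (t * u) s := h0.const_add p
      have hm : p + (s : ℂ) * (t * u) ∈ Lᶜ := by
        have := hDL p hpD (s * t)
        push_cast at this
        rwa [mul_assoc] at this
      exact ((hd _ hm).comp s h1).sub (h0.const_mul (h z₀))
    have hb : ∀ s ∈ Ico (0:ℝ) 1,
        ‖h (p + s * (t * u)) * (t * u) - h z₀ * (t * u)‖ ≤ ε * ‖t * u‖ := by
      intro s hs
      rw [← sub_mul, norm_mul]
      apply mul_le_mul_of_nonneg_right _ (norm_nonneg _)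
      apply hr
      have := (convex_ball z₀ r).add_smul_sub_mem hp hq ⟨hs.1, hs.2.le⟩
      simpa using this
    have := norm_image_sub_le_of_norm_deriv_le_segment_01' hder hb
    simp only [Complex.ofReal_one, Complex.ofReal_zero, one_mul, zero_mul, add_zero, mul_zero,
      sub_zero] at this
    rw [sub_right_comm]
    exact this
  have hne : (nhdsWithin p D).NeBot := mem_closure_iff_nhdsWithin_neBot.1 (hD p)
  have hc : Continuous fun p => ‖g (p + t * u) - g p - h z₀ * (t * u)‖ := by fun_prop
  refine le_of_tendsto (hc.continuousAt.tendsto.mono_left (nhdsWithin_le_nhds (s := D))) ?_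
  have e1 : ∀ᶠ x in nhds p, x ∈ Metric.ball z₀ r := Metric.isOpen_ball.mem_nhds hp
  have e2 : ∀ᶠ x in nhds p, x + t * u ∈ Metric.ball z₀ r :=
    (show Continuous fun x : ℂ => x + t * u by fun_prop).continuousAt.eventually
      (Metric.isOpen_ball.mem_nhds hq)
  filter_upwards [self_mem_nhdsWithin, nhdsWithin_le_nhds e1, nhdsWithin_le_nhds e2]
    with x h1 h2 h3 using key x h1 h2 h3


/-- Let `L ⊆ ℂ` be a compact set of zero two-dimensional Lebesgue measure such that
almost every horizontal line and almost every vertical line misses `L`. Then every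
function `f` holomorphic on `ℂ \ L`, such that `f` and `f'` extend continuously to
the closure of `ℂ \ L` in `ℂ` and `f` has a finite limit at infinity, is constant;
that is, `a₁(L) = 0`. -/
theorem a1_zero_of_null_and_lines_miss
    (L : Set ℂ) (hL : IsCompact L) (hvol : volume L = 0)
    (hH : ∀ᵐ a : ℝ, ∀ z ∈ L, z.im ≠ a)
    (hV : ∀ᵐ b : ℝ, ∀ z ∈ L, z.re ≠ b) :
    ∀ f : ℂ → ℂ, DifferentiableOn ℂ f Lᶜ →
      (∃ g : ℂ → ℂ, ContinuousOn g (closure Lᶜ) ∧ Set.EqOn g f Lᶜ) →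
      (∃ g : ℂ → ℂ, ContinuousOn g (closure Lᶜ) ∧ Set.EqOn g (deriv f) Lᶜ) →
      (∃ c : ℂ, Tendsto f (cocompact ℂ) (nhds c)) →
      ∃ c : ℂ, ∀ z ∈ Lᶜ, f z = c := by
  intro f hf ⟨g, hg, hgf⟩ ⟨h, hh, hhf⟩ ⟨c, hc⟩
  have hcl : closure Lᶜ = univ := by
    rw [closure_compl, interior_eq_empty_iff_dense_compl.2, compl_empty]
    exact Measure.dense_of_ae (μ := volume) (p := fun z => z ∈ Lᶜ) (measure_eq_zero_iff_ae_notMem.1 hvol)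
  rw [hcl, continuousOn_univ] at hg hh
  have hopen : IsOpen Lᶜ := hL.isClosed.isOpen_compl
  have hd : ∀ z ∈ Lᶜ, HasDerivAt g (h z) z := by
    intro z hz
    rw [hhf hz]
    have := (hf.differentiableAt (hopen.mem_nhds hz)).hasDerivAt
    exact this.congr_of_eventuallyEq (hgf.eventuallyEq_of_mem (hopen.mem_nhds hz))
  have hDH : Dense {p : ℂ | ∀ z ∈ L, z.im ≠ p.im} :=
    (Measure.dense_of_ae hH).preimage Complex.isOpenMap_im
  have hDV : Dense {p : ℂ | ∀ z ∈ L, z.re ≠ p.re} :=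
    (Measure.dense_of_ae hV).preimage Complex.isOpenMap_re
  have hdiff : Differentiable ℂ g := by
    intro z₀
    refine HasDerivAt.differentiableAt (f' := h z₀) ?_
    rw [hasDerivAt_iff_isLittleO, Asymptotics.isLittleO_iff]
    intro ε hε
    obtain ⟨r, hr0, hr⟩ := Metric.continuousAt_iff.1 (hh.continuousAt (x := z₀)) (ε / 2)
      (half_pos hε)
    have hr' : ∀ z ∈ Metric.ball z₀ r, ‖h z - h z₀‖ ≤ ε / 2 := by
      intro z hz
      rw [← dist_eq_norm]
      exact (hr hz).le
    filter_upwards [Metric.ball_mem_nhds z₀ hr0] with z hz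
    set a : ℝ := (z - z₀).re with ha
    set b : ℝ := (z - z₀).im with hb
    have hzz : z₀ + a * 1 + b * Complex.I = z := by
      rw [mul_one, add_assoc, Complex.re_add_im]; ring
    have hna : ‖(a : ℂ) * 1‖ ≤ ‖z - z₀‖ := by
      rw [mul_one, Complex.norm_real]; exact Complex.abs_re_le_norm (z - z₀)
    have hnb : ‖(b : ℂ) * Complex.I‖ ≤ ‖z - z₀‖ := by
      rw [norm_mul, Complex.norm_I, mul_one, Complex.norm_real]; exact Complex.abs_im_le_norm (z - z₀)
    have hm : z₀ + a * 1 ∈ Metric.ball z₀ r := by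
      rw [mem_ball_iff_norm] at hz ⊢
      rw [add_sub_cancel_left]
      exact hna.trans_lt hz
    have A := aux_line L g h hg hd 1 _ hDH (by
      intro p hp t hL'
      exact hp _ hL' (by simp)) z₀ r (ε / 2) hr' z₀ a (Metric.mem_ball_self hr0) hm
    have B := aux_line L g h hg hd Complex.I _ hDV (by
      intro p hp t hL'
      exact hp _ hL' (by simp)) z₀ r (ε / 2) hr' (z₀ + a * 1) b hm (by rwa [hzz])
    rw [hzz] at B
    have e : g z - g z₀ - (z - z₀) • h z₀ = (g (z₀ + a * 1) - g z₀ - h z₀ * (a * 1)) +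
        (g z - g (z₀ + a * 1) - h z₀ * (b * Complex.I)) := by
      have : z - z₀ = a * 1 + b * Complex.I := by rw [← hzz]; ring
      rw [smul_eq_mul, this]; ring
    rw [e]
    refine (norm_add_le _ _).trans ?_
    nlinarith
  have hlim : Tendsto g (cocompact ℂ) (nhds c) := by
    refine hc.congr' ?_
    filter_upwards [hL.compl_mem_cocompact] with z hz using (hgf hz).symm
  exact ⟨c, fun z hz => by rw [← hgf hz]; exact hdiff.apply_eq_of_tendsto_cocompact z hlim⟩
end

section
/- Let L ⊆ ℂ be a closed set without isolated points, let z0 ∈ L, let r > 0 and let 0 < M < ∞. Then the set of functions f ∈ C(L) for which there exists a holomorphic function F : D(z0, r) → ℂ with |F(z)| ≤ M for all z ∈ D(z0, r) and F(z) = f(z) for all z ∈ D(z0, r) ∩ L, is a closed subset of C(L) and has empty interior in C(L). -/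
open Set Metric

open Filter Topology in
lemma aux_closed
    (L : Set ℂ) (z0 : ℂ) (r : ℝ) (M : ℝ) (hM : 0 < M) :
    IsClosed {f : C(L, ℂ) | ∃ F : ℂ → ℂ,
        DifferentiableOn ℂ F (ball z0 r) ∧
        (∀ z ∈ ball z0 r, ‖F z‖ ≤ M) ∧
        ∀ z : L, (z : ℂ) ∈ ball z0 r → F (z : ℂ) = f z} := by
  rw [isClosed_iff_ultrafilter]
  intro f U hUf hUS
  have hch : ∀ g : C(L, ℂ), ∃ F : ℂ → ℂ, (∃ F : ℂ → ℂ,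
        DifferentiableOn ℂ F (ball z0 r) ∧
        (∀ z ∈ ball z0 r, ‖F z‖ ≤ M) ∧
        ∀ z : L, (z : ℂ) ∈ ball z0 r → F (z : ℂ) = g z) →
        DifferentiableOn ℂ F (ball z0 r) ∧
        (∀ z ∈ ball z0 r, ‖F z‖ ≤ M) ∧
        ∀ z : L, (z : ℂ) ∈ ball z0 r → F (z : ℂ) = g z := by
    intro g
    by_cases h : ∃ F : ℂ → ℂ,
        DifferentiableOn ℂ F (ball z0 r) ∧
        (∀ z ∈ ball z0 r, ‖F z‖ ≤ M) ∧
        ∀ z : L, (z : ℂ) ∈ ball z0 r → F (z : ℂ) = g z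
    · obtain ⟨F, hF⟩ := h
      exact ⟨F, fun _ => hF⟩
    · exact ⟨0, fun h' => absurd h' h⟩
  choose Φ hΦ using hch
  have hev : ∀ᶠ g in (U : Filter C(L, ℂ)), DifferentiableOn ℂ (Φ g) (ball z0 r) ∧
        (∀ z ∈ ball z0 r, ‖Φ g z‖ ≤ M) ∧
        ∀ z : L, (z : ℂ) ∈ ball z0 r → Φ g (z : ℂ) = g z := by
    filter_upwards [hUS] with g hg using hΦ g hg
  have hlim : ∀ z : ℂ, ∃ y : ℂ, z ∈ ball z0 r →
      ‖y‖ ≤ M ∧ Tendsto (fun g => Φ g z) (U : Filter C(L, ℂ)) (𝓝 y) := by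
    intro z
    by_cases hz : z ∈ ball z0 r
    · have hc := (isCompact_closedBall (0 : ℂ) M).ultrafilter_le_nhds (U.map (fun g => Φ g z)) (by
        rw [le_principal_iff]
        change ∀ᶠ g in (U : Filter C(L, ℂ)), Φ g z ∈ closedBall (0 : ℂ) M
        filter_upwards [hev] with g hg
        simpa using hg.2.1 z hz)
      obtain ⟨y, hy, hyl⟩ := hc
      exact ⟨y, fun _ => ⟨by simpa using hy, hyl⟩⟩
    · exact ⟨0, fun h => absurd h hz⟩
  choose F hF using hlim
  refine ⟨F, ?_, fun z hz => (hF z hz).1, ?_⟩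
  · have hloc : TendstoLocallyUniformlyOn Φ F (U : Filter C(L, ℂ)) (ball z0 r) := by
      rw [Metric.tendstoLocallyUniformlyOn_iff]
      intro ε hε x hx
      obtain ⟨R, hR, hRs⟩ := Metric.isOpen_iff.1 isOpen_ball x hx
      have hlip : ∀ᶠ g in (U : Filter C(L, ℂ)), ∀ w ∈ ball x R,
          dist (Φ g w) (Φ g x) ≤ (3 * M) / R * dist w x := by
        filter_upwards [hev] with g hg w hw
        refine Complex.dist_le_div_mul_dist_of_mapsTo_ball (hg.1.mono hRs) ?_ hw
        intro v hv
        have h1 := hg.2.1 v (hRs hv)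
        have h2 := hg.2.1 x hx
        have h3 := norm_sub_le (Φ g v) (Φ g x)
        first
        | (rw [mem_ball, dist_eq_norm]; linarith)
        | (rw [mem_closedBall, dist_eq_norm]; linarith)
      have hlipF : ∀ w ∈ ball x R, dist (F w) (F x) ≤ (3 * M) / R * dist w x := by
        intro w hw
        refine le_of_tendsto ((hF w (hRs hw)).2.dist (hF x hx).2) ?_
        filter_upwards [hlip] with g hg using hg w hw
      obtain ⟨δ, hδ, hδ'⟩ : ∃ δ > 0, (3 * M) / R * δ ≤ ε / 3 := by
        refine ⟨ε / 3 / ((3 * M) / R), by positivity, le_of_eq ?_⟩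
        field_simp
      refine ⟨ball x (min R δ), mem_nhdsWithin_of_mem_nhds
        (ball_mem_nhds _ (lt_min hR hδ)), ?_⟩
      filter_upwards [hlip, (hF x hx).2.eventually (ball_mem_nhds _ (by positivity : 0 < ε / 3))]
        with g hg hgx w hw
      have hw1 : w ∈ ball x R := ball_subset_ball (min_le_left _ _) hw
      have hw2 : w ∈ ball x δ := ball_subset_ball (min_le_right _ _) hw
      have hK : (3 * M) / R * dist w x ≤ ε / 3 :=
        le_trans (mul_le_mul_of_nonneg_left (mem_ball.1 hw2).le (by positivity)) hδ'
      have a1 := hg w hw1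
      have a2 := hlipF w hw1
      have a3 : dist (Φ g x) (F x) < ε / 3 := hgx
      have a4 := dist_triangle4 (F w) (F x) (Φ g x) (Φ g w)
      rw [dist_comm (F x), dist_comm (Φ g x) (Φ g w)] at a4
      linarith
    exact hloc.differentiableOn (hev.mono fun g hg => hg.1) isOpen_ball
  · intro z hz
    refine tendsto_nhds_unique (hF z hz).2 ?_
    have h1 : Tendsto (fun g : C(L, ℂ) => g z) (U : Filter C(L, ℂ)) (𝓝 (f z)) :=
      ((continuous_eval_const z : Continuous fun g : C(L, ℂ) => g z).tendsto f).mono_left hUf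
    refine h1.congr' ?_
    filter_upwards [hev] with g hg using (hg.2.2 z hz).symm

open Filter Topology in
lemma aux_interior
    (L : Set ℂ)
    (z0 : ℂ) (hz0 : z0 ∈ L) (hiso : z0 ∈ closure (L \ {z0})) (r : ℝ) (hr : 0 < r) (M : ℝ) :
    interior {f : C(L, ℂ) | ∃ F : ℂ → ℂ,
        DifferentiableOn ℂ F (ball z0 r) ∧
        (∀ z ∈ ball z0 r, ‖F z‖ ≤ M) ∧
        ∀ z : L, (z : ℂ) ∈ ball z0 r → F (z : ℂ) = f z} = ∅ := by
  rw [Set.eq_empty_iff_forall_notMem]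
  intro f hf
  obtain ⟨F, hFd, -, hFe⟩ := interior_subset hf
  let h : C(L, ℂ) := ⟨fun z => ((Real.sqrt ‖(z : ℂ) - z0‖ : ℝ) : ℂ), by fun_prop⟩
  have hcont : Continuous (fun t : ℝ => f + (t : ℂ) • h) := by fun_prop
  have hev := hcont.continuousAt.preimage_mem_nhds (x := (0 : ℝ))
    (by
      have e : f + ((0 : ℝ) : ℂ) • h = f := by ext z; simp
      rw [e]
      exact isOpen_interior.mem_nhds hf)
  obtain ⟨t, ht, htpos⟩ := ((nhdsWithin_le_nhds (s := Ioi (0 : ℝ)) hev : _ ∈ 𝓝[>] (0 : ℝ))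
    |> fun h => (Filter.nonempty_of_mem (inter_mem h self_mem_nhdsWithin)))
  have htpos : 0 < t := htpos
  obtain ⟨G, hGd, -, hGe⟩ := interior_subset ht
  have hz0b : z0 ∈ ball z0 r := mem_ball_self hr
  have hnb : ball z0 r ∈ 𝓝 z0 := ball_mem_nhds _ hr
  have hd : DifferentiableAt ℂ (fun z => G z - F z) z0 :=
    (hGd.differentiableAt hnb).sub (hFd.differentiableAt hnb)
  have hval : ∀ z ∈ L, z ∈ ball z0 r → ‖G z - F z‖ = t * Real.sqrt ‖z - z0‖ := by
    intro z hz hzb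
    rw [hGe ⟨z, hz⟩ hzb, hFe ⟨z, hz⟩ hzb]
    simp [h, abs_of_pos htpos, abs_of_nonneg (Real.sqrt_nonneg _)]
  have h0 : G z0 - F z0 = 0 := by
    rw [← norm_eq_zero, hval z0 hz0 hz0b]; simp
  obtain ⟨C, hCpos, hC⟩ := hd.isBigO_sub.exists_pos
  have hC := hC.bound
  have hsmall : ∀ᶠ z in 𝓝 z0, C * Real.sqrt ‖z - z0‖ < t := by
    have hc : ContinuousAt (fun z : ℂ => C * Real.sqrt ‖z - z0‖) z0 := by fun_prop
    exact hc.eventually_lt continuousAt_const (by simpa using htpos)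
  obtain ⟨z, ⟨⟨hz1, hz2⟩, hz3⟩, hzL, hzne⟩ :=
    mem_closure_iff_nhds.1 hiso _ (inter_mem (inter_mem hC hsmall) hnb)
  have hz1 : ‖(G z - F z) - (G z0 - F z0)‖ ≤ C * ‖z - z0‖ := hz1
  have hz2 : C * Real.sqrt ‖z - z0‖ < t := hz2
  rw [h0, sub_zero, hval z hzL hz3] at hz1
  have hpos : 0 < ‖z - z0‖ := norm_pos_iff.2 (sub_ne_zero.2 hzne)
  have hs := Real.sqrt_pos.2 hpos
  have hss := Real.mul_self_sqrt hpos.le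
  nlinarith

/-- Let `L ⊆ ℂ` be closed without isolated points, `z0 ∈ L`, `r > 0`, `0 < M < ∞`.
The set of `f ∈ C(L)` (with the topology of uniform convergence on compact subsets
of `L`, i.e. the compact-open topology) admitting a holomorphic function
`F : D(z0, r) → ℂ` bounded by `M` with `F = f` on `D(z0, r) ∩ L` is closed and has
empty interior in `C(L)`. -/
theorem boundedExtendable_isClosed_and_interior_empty
    (L : Set ℂ) (hLclosed : IsClosed L)
    (hno_iso : ∀ z ∈ L, z ∈ closure (L \ {z}))
    (z0 : ℂ) (hz0 : z0 ∈ L) (r : ℝ) (hr : 0 < r) (M : ℝ) (hM : 0 < M) :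
    IsClosed {f : C(L, ℂ) | ∃ F : ℂ → ℂ,
        DifferentiableOn ℂ F (ball z0 r) ∧
        (∀ z ∈ ball z0 r, ‖F z‖ ≤ M) ∧
        ∀ z : L, (z : ℂ) ∈ ball z0 r → F (z : ℂ) = f z} ∧
    interior {f : C(L, ℂ) | ∃ F : ℂ → ℂ,
        DifferentiableOn ℂ F (ball z0 r) ∧
        (∀ z ∈ ball z0 r, ‖F z‖ ≤ M) ∧
        ∀ z : L, (z : ℂ) ∈ ball z0 r → F (z : ℂ) = f z} = ∅ := by
  exact ⟨aux_closed L z0 r M hM, aux_interior L z0 hz0 (hno_iso z0 hz0) r hr M⟩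
end

section
/- Let L ⊆ ℂ be a closed set without isolated points and let z0 ∈ L. Then the class of functions f ∈ C(L) which are non-holomorphically extendable at z0 — that is, for which there exists no pair of an open disc D(z0, r) with r > 0 and a holomorphic function F : D(z0, r) → ℂ such that F = f on D(z0, r) ∩ L — is a dense and Gδ subset of C(L). -/
open Set Metric

/-- The compact set of admissible coefficient sequences. -/
def coefSet (M : ℝ) : Set (ℕ → ℂ) := Set.univ.pi fun k => closedBall (0 : ℂ) (M ^ (k + 1))

/-- Functions given near `z0` by a power series with coefficients in `coefSet M`. -/
def extSet (L : Set ℂ) (z0 : ℂ) (M : ℝ) : Set C(L, ℂ) :=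
  {f | ∃ a ∈ coefSet M, ∀ z : L, (z : ℂ) ∈ ball z0 (1 / (2 * M)) →
    f z = ∑' k, a k * ((z : ℂ) - z0) ^ k}

lemma coef_bound {M : ℝ} (hM : 0 < M) {a : ℕ → ℂ} (ha : a ∈ coefSet M) {w : ℂ}
    (hw : ‖w‖ ≤ 1 / (2 * M)) (k : ℕ) : ‖a k * w ^ k‖ ≤ M * (1 / 2) ^ k := by
  have h1 : ‖a k‖ ≤ M ^ (k + 1) := by
    have := ha k (mem_univ k)
    simpa using this
  calc ‖a k * w ^ k‖ = ‖a k‖ * ‖w‖ ^ k := by rw [norm_mul, norm_pow]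
    _ ≤ M ^ (k + 1) * (1 / (2 * M)) ^ k := by gcongr
    _ = M * (M * (1 / (2 * M))) ^ k := by rw [mul_pow]; ring
    _ = M * (1 / 2) ^ k := by
      congr 2
      field_simp

lemma summable_bd (M : ℝ) : Summable fun k : ℕ => M * (1 / 2 : ℝ) ^ k :=
  (summable_geometric_of_lt_one (by norm_num) (by norm_num)).mul_left M

lemma isClosed_extSet (L : Set ℂ) (z0 : ℂ) {M : ℝ} (hM : 0 < M) :
    IsClosed (extSet L z0 M) := by
  have hK : IsCompact (coefSet M) := isCompact_univ_pi fun k => isCompact_closedBall _ _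
  have : CompactSpace (coefSet M) := isCompact_iff_compactSpace.mp hK
  let S : Set (coefSet M × C(L, ℂ)) := {p | ∀ z : L, (z : ℂ) ∈ ball z0 (1 / (2 * M)) →
    p.2 z = ∑' k, p.1.1 k * ((z : ℂ) - z0) ^ k}
  have hS : IsClosed S := by
    have : S = ⋂ z : L, ⋂ (_ : (z : ℂ) ∈ ball z0 (1 / (2 * M))),
        {p : coefSet M × C(L, ℂ) | p.2 z = ∑' k, p.1.1 k * ((z : ℂ) - z0) ^ k} := by
      ext p; simp [S]
    rw [this]
    refine isClosed_iInter fun z => isClosed_iInter fun hz => isClosed_eq ?_ ?_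
    · exact (ContinuousEvalConst.continuous_eval_const z).comp continuous_snd
    · refine continuous_tsum (fun k => ?_) (summable_bd M) (fun k p => ?_)
      · exact ((continuous_apply k).comp (continuous_subtype_val.comp continuous_fst)).mul
          continuous_const
      · refine coef_bound hM p.1.2 ?_ k
        rw [mem_ball_iff_norm] at hz
        exact hz.le
  have himg : extSet L z0 M = Prod.snd '' S := by
    ext f
    constructor
    · rintro ⟨a, ha, h⟩
      exact ⟨(⟨a, ha⟩, f), h, rfl⟩
    · rintro ⟨⟨a, g⟩, h, rfl⟩
      exact ⟨a.1, a.2, h⟩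
  rw [himg]
  exact isClosedMap_snd_of_compactSpace _ hS

/-- Holomorphic extendability at `z0`. -/
def HolExt (L : Set ℂ) (z0 : ℂ) (f : C(L, ℂ)) : Prop :=
  ∃ r : ℝ, 0 < r ∧ ∃ F : ℂ → ℂ, DifferentiableOn ℂ F (ball z0 r) ∧
    ∀ z : L, (z : ℂ) ∈ ball z0 r → F (z : ℂ) = f z

lemma holExt_of_extSet {L : Set ℂ} {z0 : ℂ} {M : ℝ} (hM : 0 < M) {f : C(L, ℂ)}
    (hf : f ∈ extSet L z0 M) : HolExt L z0 f := by
  obtain ⟨a, ha, h⟩ := hf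
  refine ⟨1 / (2 * M), by positivity, fun z => ∑' k, a k * (z - z0) ^ k, ?_,
    fun z hz => (h z hz).symm⟩
  refine Complex.differentiableOn_tsum_of_summable_norm (summable_bd M) (fun k => ?_)
    isOpen_ball (fun k w hw => ?_)
  · fun_prop
  · refine coef_bound hM ha ?_ k
    rw [mem_ball_iff_norm] at hw
    exact hw.le

lemma extSet_of_holExt {L : Set ℂ} {z0 : ℂ} {f : C(L, ℂ)}
    (hf : HolExt L z0 f) : ∃ n : ℕ, f ∈ extSet L z0 (n + 1) := by
  obtain ⟨r, hr, F, hF, hFf⟩ := hf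
  let R : NNReal := ⟨r / 2, by positivity⟩
  have hR : (R : ℝ) = r / 2 := rfl
  have hR0 : 0 < R := by rw [← NNReal.coe_pos, hR]; positivity
  have hps := (hF.mono (closedBall_subset_ball (by rw [hR]; linarith) :
    closedBall z0 R ⊆ ball z0 r)).hasFPowerSeriesOnBall hR0
  set p := cauchyPowerSeries F z0 R with hp
  let ρ : NNReal := R / 2
  have hρ0 : 0 < ρ := by positivity
  have hρR : ρ < R := NNReal.half_lt_self hR0.ne'
  obtain ⟨C, hC, hb⟩ := p.norm_mul_pow_le_of_lt_radius
    (lt_of_lt_of_le (ENNReal.coe_lt_coe.mpr hρR) hps.r_le)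
  have hρ' : (0 : ℝ) < ρ := hρ0
  have hρR' : (ρ : ℝ) < R := hρR
  obtain ⟨n, hn⟩ := exists_nat_ge (max C (1 / (ρ : ℝ)))
  have hnC : C ≤ n + 1 := by linarith [le_max_left C (1 / (ρ : ℝ))]
  have hnρ : 1 / (ρ : ℝ) ≤ n + 1 := by linarith [le_max_right C (1 / (ρ : ℝ))]
  have hn1 : (0 : ℝ) < n + 1 := by positivity
  have hsm : 1 / (2 * ((n : ℝ) + 1)) < R := by
    have : 1 / ((n : ℝ) + 1) ≤ ρ := by
      rw [div_le_iff₀ hn1]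
      rw [div_le_iff₀ hρ'] at hnρ
      linarith
    have h2 : 1 / (2 * ((n : ℝ) + 1)) ≤ 1 / ((n : ℝ) + 1) :=
      one_div_le_one_div_of_le hn1 (by linarith)
    linarith
  refine ⟨n, p.coeff, ?_, ?_⟩
  · intro k _
    rw [mem_closedBall_zero_iff]
    have h1 : ‖p.coeff k‖ * (ρ : ℝ) ^ k ≤ C := by
      have := hb k
      rwa [FormalMultilinearSeries.norm_apply_eq_norm_coef] at this
    calc ‖p.coeff k‖ ≤ C / (ρ : ℝ) ^ k := by rwa [le_div_iff₀ (by positivity)]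
      _ = C * (1 / (ρ : ℝ)) ^ k := by rw [one_div, inv_pow]; rfl
      _ ≤ ((n : ℝ) + 1) * ((n : ℝ) + 1) ^ k := by gcongr
      _ = ((n : ℝ) + 1) ^ (k + 1) := by ring
  · intro z hz
    rw [mem_ball_iff_norm] at hz
    have hzR : ‖(z : ℂ) - z0‖ < R := hz.trans hsm
    rw [← hFf z (by rw [mem_ball_iff_norm]; linarith)]
    have hs := hps.hasSum (y := (z : ℂ) - z0) (by
      rw [Metric.eball_coe, mem_ball_zero_iff]
      exact hzR)
    simp only [FormalMultilinearSeries.apply_eq_pow_smul_coeff, smul_eq_mul,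
      add_sub_cancel] at hs
    rw [← hs.tsum_eq]
    exact tsum_congr fun k => mul_comm _ _

lemma exists_not_holExt (L : Set ℂ) (z0 : ℂ) (hz0 : z0 ∈ L) (hiso : z0 ∈ closure (L \ {z0})) :
    ∃ g : C(L, ℂ), ¬ HolExt L z0 g := by
  refine ⟨⟨fun z => ((Real.sqrt ‖(z : ℂ) - z0‖ : ℝ) : ℂ), by fun_prop⟩, ?_⟩
  rintro ⟨r, hr, F, hF, hFf⟩
  have hd : DifferentiableAt ℂ F z0 := hF.differentiableAt (ball_mem_nhds z0 hr)
  obtain ⟨C, hC⟩ := hd.isBigO_sub.bound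
  obtain ⟨e, he, hC⟩ := Metric.eventually_nhds_iff.mp hC
  have hF0 : F z0 = 0 := by
    have := hFf ⟨z0, hz0⟩ (mem_ball_self hr)
    simpa using this
  let D : ℝ := |C| + 1
  have hD : 0 < D := by positivity
  obtain ⟨w, ⟨hwL, hwne⟩, hw⟩ := Metric.mem_closure_iff.mp hiso (min (min r e) (1 / D ^ 2))
    (by positivity)
  rw [dist_comm] at hw
  have h1 : dist w z0 < r := hw.trans_le ((min_le_left _ _).trans (min_le_left _ _))
  have h2 : dist w z0 < e := hw.trans_le ((min_le_left _ _).trans (min_le_right _ _))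
  have h3 : dist w z0 < 1 / D ^ 2 := hw.trans_le (min_le_right _ _)
  have hb := hC h2
  have hFw := hFf ⟨w, hwL⟩ h1
  simp only [ContinuousMap.coe_mk] at hFw
  rw [hF0, sub_zero, hFw, Complex.norm_real, Real.norm_of_nonneg (Real.sqrt_nonneg _)] at hb
  rw [dist_eq_norm] at h3
  have ht : 0 < ‖w - z0‖ := norm_pos_iff.mpr (sub_ne_zero.mpr hwne)
  set t := ‖w - z0‖
  set s := Real.sqrt t
  have hs : 0 < s := Real.sqrt_pos.mpr ht
  have hst : s * s = t := Real.mul_self_sqrt ht.le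
  have hCD : C ≤ D := by linarith [le_abs_self C]
  have h4 : s ≤ D * (s * s) := by rw [hst]; exact hb.trans (by gcongr)
  have h5 : 1 ≤ D * s := by
    by_contra! h
    nlinarith
  rw [lt_div_iff₀ (by positivity), ← hst] at h3
  nlinarith

lemma HolExt.sub_smul {L : Set ℂ} {z0 : ℂ} {f g : C(L, ℂ)} {c : ℂ} (hc : c ≠ 0)
    (hf : HolExt L z0 f) (hfg : HolExt L z0 (f + c • g)) : HolExt L z0 g := by
  obtain ⟨r, hr, F, hF, hFf⟩ := hf
  obtain ⟨s, hs, G, hG, hGf⟩ := hfg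
  refine ⟨min r s, lt_min hr hs, fun z => c⁻¹ * (G z - F z), ?_, fun z hz => ?_⟩
  · exact ((hG.mono (ball_subset_ball (min_le_right _ _))).sub
      (hF.mono (ball_subset_ball (min_le_left _ _)))).const_mul _
  · have h1 := hFf z (ball_subset_ball (min_le_left _ _) hz)
    have h2 := hGf z (ball_subset_ball (min_le_right _ _) hz)
    simp only [h1, h2, ContinuousMap.add_apply, ContinuousMap.smul_apply, smul_eq_mul]
    field_simp
    ring

/-- Let `L ⊆ ℂ` be closed without isolated points and `z0 ∈ L`. The class of
functions `f ∈ C(L)` (with the topology of uniform convergence on compact subsets of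
`L`, i.e. the compact-open topology) which are non-holomorphically extendable at
`z0` — i.e. there is no `r > 0` and holomorphic `F : D(z0, r) → ℂ` with `F = f` on
`D(z0, r) ∩ L` — is a dense and `Gδ` subset of `C(L)`. -/
theorem nonHolExtendableAt_dense_Gdelta
    (L : Set ℂ) (hLclosed : IsClosed L)
    (hno_iso : ∀ z ∈ L, z ∈ closure (L \ {z}))
    (z0 : ℂ) (hz0 : z0 ∈ L) :
    Dense {f : C(L, ℂ) | ¬ ∃ r : ℝ, 0 < r ∧ ∃ F : ℂ → ℂ,
        DifferentiableOn ℂ F (ball z0 r) ∧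
        ∀ z : L, (z : ℂ) ∈ ball z0 r → F (z : ℂ) = f z} ∧
    IsGδ {f : C(L, ℂ) | ¬ ∃ r : ℝ, 0 < r ∧ ∃ F : ℂ → ℂ,
        DifferentiableOn ℂ F (ball z0 r) ∧
        ∀ z : L, (z : ℂ) ∈ ball z0 r → F (z : ℂ) = f z} := by
  change Dense {f : C(L, ℂ) | ¬ HolExt L z0 f} ∧ IsGδ {f : C(L, ℂ) | ¬ HolExt L z0 f}
  constructor
  · obtain ⟨g, hg⟩ := exists_not_holExt L z0 hz0 (hno_iso z0 hz0)
    intro f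
    by_cases hf : HolExt L z0 f
    · have hlim : Filter.Tendsto (fun n : ℕ => f + (1 / ((n : ℂ) + 1)) • g) Filter.atTop
          (nhds f) := by
        have h0 : Filter.Tendsto (fun n : ℕ => 1 / ((n : ℂ) + 1)) Filter.atTop (nhds 0) :=
          tendsto_one_div_add_atTop_nhds_zero_nat
        have h1 := (h0.smul_const g).const_add f
        have e : f + (0 : ℂ) • g = f := by
          ext z
          simp
        rw [e] at h1
        exact h1
      refine mem_closure_of_tendsto hlim (Filter.Eventually.of_forall fun n hn => hg ?_)
      refine HolExt.sub_smul ?_ hf hn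
      exact one_div_ne_zero (Nat.cast_add_one_ne_zero n)
    · exact subset_closure hf
  · have : {f : C(L, ℂ) | ¬ HolExt L z0 f} = ⋂ n : ℕ, (extSet L z0 ((n : ℝ) + 1))ᶜ := by
      ext f
      simp only [mem_ofPred_eq, mem_iInter, mem_compl_iff]
      constructor
      · intro h n hn
        exact h (holExt_of_extSet (by positivity) hn)
      · intro h hf
        obtain ⟨n, hn⟩ := extSet_of_holExt hf
        exact h n hn
    rw [this]
    exact IsGδ.iInter_of_isOpen fun n =>
      (isClosed_extSet L z0 (by positivity)).isOpen_compl
end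

section
/- Let L ⊆ ℂ be a closed set without isolated points. Then the class of nowhere holomorphically extendable functions f ∈ C(L) — that is, those f for which there exists no triple of a point z0 ∈ L, a radius r > 0 and a holomorphic function F : D(z0, r) → ℂ such that F = f on D(z0, r) ∩ L — is a dense and Gδ subset of C(L). -/
open Set Metric

/-- Functions on `L` given near `c` by a power series with controlled coefficients. -/
def bddExt (L : Set ℂ) (c : ℂ) (r M : ℝ) : Set C(L, ℂ) :=
  {f | ∃ a : ℕ → ℂ, (∀ n, ‖a n‖ ≤ M * r⁻¹ ^ n) ∧
    ∀ z : L, (z : ℂ) ∈ ball c r → ∑' n, a n * ((z : ℂ) - c) ^ n = f z}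

theorem term_bound {a : ℕ → ℂ} {r M s : ℝ} (ha : ∀ n, ‖a n‖ ≤ M * r⁻¹ ^ n)
    {w : ℂ} (hw : ‖w‖ ≤ s) (n : ℕ) : ‖a n * w ^ n‖ ≤ M * (r⁻¹ * s) ^ n := by
  rw [norm_mul, norm_pow, mul_pow, ← mul_assoc]
  have h0 := (norm_nonneg _).trans (ha n)
  have h1 : ‖w‖ ^ n ≤ s ^ n := pow_le_pow_left₀ (norm_nonneg _) hw n
  exact mul_le_mul (ha n) h1 (by positivity) h0

theorem summ_bound {r M s : ℝ} (hr : 0 < r) (hs : 0 ≤ s) (hsr : s < r) :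
    Summable (fun n : ℕ => M * (r⁻¹ * s) ^ n) := by
  refine (summable_geometric_of_lt_one (by positivity) ?_).mul_left M
  rw [inv_mul_lt_iff₀ hr]; simpa using hsr

theorem isClosed_bddExt (L : Set ℂ) (c : ℂ) (r M : ℝ) (hr : 0 < r) :
    IsClosed (bddExt L c r M) := by
  let K := (n : ℕ) → closedBall (0 : ℂ) (M * r⁻¹ ^ n)
  have hK : ∀ (a : K) (n : ℕ), ‖((a n : ℂ))‖ ≤ M * r⁻¹ ^ n := fun a n => by
    simpa using (a n).2
  let S : Set (C(L, ℂ) × K) := {p | ∀ z : L, (z : ℂ) ∈ ball c r →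
    ∑' n, (p.2 n : ℂ) * ((z : ℂ) - c) ^ n = p.1 z}
  have hS : IsClosed S := by
    simp only [S, ofPred_forall]
    refine isClosed_iInter fun z => isClosed_iInter fun hz => ?_
    have hz' : ‖(z : ℂ) - c‖ < r := by simpa [dist_eq_norm] using hz
    refine isClosed_eq ?_ ?_
    · refine continuous_tsum (fun n => ?_) (summ_bound (M := M) hr (norm_nonneg _) hz')
        (fun n p => term_bound (hK p.2) le_rfl n)
      fun_prop
    · exact (continuous_eval_const z).comp continuous_fst
  have : bddExt L c r M = Prod.fst '' S := by
    ext f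
    constructor
    · rintro ⟨a, ha, h⟩
      exact ⟨(f, fun n => ⟨a n, by simpa using ha n⟩), h, rfl⟩
    · rintro ⟨⟨g, a⟩, h, rfl⟩
      exact ⟨fun n => a n, hK a, h⟩
  rw [this]
  exact isClosedMap_fst_of_compactSpace _ hS

/-- Functions extendable to a given disc form a subspace. -/
def extSub (L : Set ℂ) (c : ℂ) (r : ℝ) : Submodule ℂ C(L, ℂ) where
  carrier := {f | ∃ F : ℂ → ℂ, DifferentiableOn ℂ F (ball c r) ∧
        ∀ z : L, (z : ℂ) ∈ ball c r → F (z : ℂ) = f z}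
  zero_mem' := ⟨fun _ => 0, by fun_prop, by simp⟩
  add_mem' := by
    rintro f g ⟨F, hF, hF'⟩ ⟨G, hG, hG'⟩
    exact ⟨fun z => F z + G z, hF.add hG, fun z hz => by simp [hF' z hz, hG' z hz]⟩
  smul_mem' := by
    rintro k f ⟨F, hF, hF'⟩
    exact ⟨fun z => k * F z, hF.const_mul k, fun z hz => by simp [hF' z hz]⟩

theorem bddExt_subset (L : Set ℂ) (c : ℂ) (r M : ℝ) (hr : 0 < r) :
    bddExt L c r M ⊆ extSub L c (r / 2) := by
  rintro f ⟨a, ha, h⟩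
  refine ⟨fun z => ∑' n, a n * (z - c) ^ n, ?_, fun z hz =>
    h z (ball_subset_ball (by linarith) hz)⟩
  refine Complex.differentiableOn_tsum_of_summable_norm
    (summ_bound (M := M) (s := r / 2) hr (by linarith) (by linarith))
    (fun n => by fun_prop) isOpen_ball (fun n w hw => term_bound ha ?_ n)
  rw [mem_ball, dist_eq_norm] at hw
  exact hw.le

theorem extSub_ne_top (L : Set ℂ) (c : ℂ) (hcL : c ∈ L) (hc : c ∈ closure (L \ {c})) (r : ℝ)
    (hr : 0 < r) : extSub L c r ≠ ⊤ := by
  intro htop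
  let g : C(L, ℂ) := ⟨fun z => ((Real.sqrt ‖(z : ℂ) - c‖ : ℝ) : ℂ), by fun_prop⟩
  have hg : g ∈ extSub L c r := htop ▸ Submodule.mem_top
  obtain ⟨F, hF, hFg⟩ := hg
  have hFc : F c = 0 := by
    rw [hFg ⟨c, hcL⟩ (mem_ball_self hr)]; simp [g]
  have hd : DifferentiableAt ℂ F c := hF.differentiableAt (ball_mem_nhds c hr)
  obtain ⟨C, hC, hb⟩ := hd.isBigO_sub.exists_pos
  rw [Asymptotics.isBigOWith_iff] at hb
  obtain ⟨δ, hδ, hb⟩ := Metric.eventually_nhds_iff.1 hb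
  rw [Metric.mem_closure_iff] at hc
  obtain ⟨w, ⟨hwL, hwc⟩, hw⟩ := hc (min (min δ r) (1 / (C ^ 2))) (by positivity)
  rw [dist_comm, lt_min_iff, lt_min_iff] at hw
  obtain ⟨⟨h1, h2⟩, h3⟩ := hw
  have h4 := hb h1
  rw [hFc, sub_zero, hFg ⟨w, hwL⟩ h2] at h4
  rw [dist_eq_norm] at h3
  have hpos : 0 < ‖w - c‖ := norm_pos_iff.2 (sub_ne_zero.2 hwc)
  have h5 : Real.sqrt ‖w - c‖ ≤ C * ‖w - c‖ := by
    simpa [g, abs_of_nonneg (Real.sqrt_nonneg _)] using h4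
  have h6 : ‖w - c‖ ≤ (C * ‖w - c‖) ^ 2 := by
    rwa [Real.sqrt_le_left (by positivity)] at h5
  rw [lt_div_iff₀ (by positivity)] at h3
  nlinarith

theorem dense_compl_bddExt (L : Set ℂ) (c : ℂ) (hcL : c ∈ L) (hc : c ∈ closure (L \ {c}))
    (r M : ℝ) (hr : 0 < r) : Dense (bddExt L c r M)ᶜ := by
  rw [← interior_eq_empty_iff_dense_compl, ← not_nonempty_iff_eq_empty]
  intro h
  exact extSub_ne_top L c hcL hc (r / 2) (by linarith)
    (Submodule.eq_top_of_nonempty_interior' _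
      (h.mono (interior_mono (bddExt_subset L c r M hr))))

theorem mem_bddExt_of_ext (L : Set ℂ) (f : C(L, ℂ)) (c : ℂ) (r : ℝ) (hr : 0 < r) (F : ℂ → ℂ)
    (hF : DifferentiableOn ℂ F (closedBall c r))
    (h : ∀ z : L, (z : ℂ) ∈ ball c r → F (z : ℂ) = f z) :
    ∃ M : ℕ, f ∈ bddExt L c r M := by
  lift r to NNReal using hr.le
  have hp := hF.hasFPowerSeriesOnBall (by exact_mod_cast hr)
  obtain ⟨M, hM⟩ := exists_nat_ge
    ((2 * Real.pi)⁻¹ * ∫ θ : ℝ in 0..2 * Real.pi, ‖F (circleMap c r θ)‖)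
  refine ⟨M, fun n => (cauchyPowerSeries F c r).coeff n, fun n => ?_, fun z hz => ?_⟩
  · rw [← FormalMultilinearSeries.norm_apply_eq_norm_coef]
    refine (norm_cauchyPowerSeries_le F c r n).trans ?_
    rw [abs_of_pos hr]
    gcongr
  · rw [← h z hz]
    have hs := hp.hasSum_sub (y := (z : ℂ)) (by simpa [Metric.eball_coe] using hz)
    rw [← hs.tsum_eq]
    refine tsum_congr fun n => ?_
    rw [FormalMultilinearSeries.apply_eq_pow_smul_coeff, smul_eq_mul, mul_comm]

/-- Let `L ⊆ ℂ` be closed without isolated points. The class of nowhere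
holomorphically extendable functions `f ∈ C(L)` (with the topology of uniform
convergence on compact subsets of `L`, i.e. the compact-open topology) — i.e. there
is no `z0 ∈ L`, `r > 0` and holomorphic `F : D(z0, r) → ℂ` with `F = f` on
`D(z0, r) ∩ L` — is a dense and `Gδ` subset of `C(L)`. -/
theorem nowhereHolExtendable_dense_Gdelta
    (L : Set ℂ) (hLclosed : IsClosed L)
    (hno_iso : ∀ z ∈ L, z ∈ closure (L \ {z})) :
    Dense {f : C(L, ℂ) | ¬ ∃ z0 ∈ L, ∃ r : ℝ, 0 < r ∧ ∃ F : ℂ → ℂ,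
        DifferentiableOn ℂ F (ball z0 r) ∧
        ∀ z : L, (z : ℂ) ∈ ball z0 r → F (z : ℂ) = f z} ∧
    IsGδ {f : C(L, ℂ) | ¬ ∃ z0 ∈ L, ∃ r : ℝ, 0 < r ∧ ∃ F : ℂ → ℂ,
        DifferentiableOn ℂ F (ball z0 r) ∧
        ∀ z : L, (z : ℂ) ∈ ball z0 r → F (z : ℂ) = f z} := by
  have hlc : LocallyCompactSpace L := hLclosed.isClosedEmbedding_subtypeVal.locallyCompactSpace
  have hsc : SigmaCompactSpace L := hLclosed.isClosedEmbedding_subtypeVal.sigmaCompactSpace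
  obtain ⟨D, hDc, hDd⟩ := TopologicalSpace.exists_countable_dense L
  have hDc' : Countable D := hDc.to_subtype
  have hpos : ∀ k : ℕ, (0 : ℝ) < 1 / ((k : ℝ) + 1) := fun k => by positivity
  let U : D × ℕ × ℕ → Set C(L, ℂ) := fun p =>
    (bddExt L ((p.1 : L) : ℂ) (1 / ((p.2.1 : ℝ) + 1)) (p.2.2 : ℝ))ᶜ
  have hUo : ∀ p, IsOpen (U p) := fun p => (isClosed_bddExt L _ _ _ (hpos _)).isOpen_compl
  have hUd : ∀ p, Dense (U p) := fun p =>
    dense_compl_bddExt L _ (p.1 : L).2 (hno_iso _ (p.1 : L).2) _ _ (hpos _)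
  have key : {f : C(L, ℂ) | ¬ ∃ z0 ∈ L, ∃ r : ℝ, 0 < r ∧ ∃ F : ℂ → ℂ,
        DifferentiableOn ℂ F (ball z0 r) ∧
        ∀ z : L, (z : ℂ) ∈ ball z0 r → F (z : ℂ) = f z} = ⋂ p, U p := by
    ext f
    rw [mem_ofPred_eq, mem_iInter, not_iff_comm, not_forall]
    constructor
    · rintro ⟨p, hp⟩
      obtain ⟨F, hF⟩ := bddExt_subset L _ _ _ (hpos _) (not_not.1 hp)
      exact ⟨_, (p.1 : L).2, _, half_pos (hpos p.2.1), F, hF⟩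
    · rintro ⟨z0, hz0, r, hr, F, hF, h⟩
      obtain ⟨k, hk⟩ := exists_nat_one_div_lt (half_pos hr)
      obtain ⟨w, hwD, hw⟩ := hDd.exists_dist_lt (⟨z0, hz0⟩ : L) (half_pos hr)
      have hsub : closedBall (w : ℂ) (1 / ((k : ℝ) + 1)) ⊆ ball z0 r := by
        intro x hx
        rw [mem_closedBall] at hx
        rw [mem_ball]
        have h1 : dist (w : ℂ) z0 < r / 2 := by rw [dist_comm]; exact hw
        linarith [dist_triangle x (w : ℂ) z0]
      obtain ⟨M, hM⟩ := mem_bddExt_of_ext L f w _ (hpos k) F (hF.mono hsub)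
        (fun z hz => h z (hsub (ball_subset_closedBall hz)))
      exact ⟨(⟨w, hwD⟩, k, M), not_not.2 hM⟩
  rw [key]
  exact ⟨dense_iInter_of_isOpen hUo hUd, IsGδ.iInter fun p => (hUo p).isGδ⟩
end
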